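/- arXiv:0912.2152 — 3 statements merged into one kernel-verified Lean document; each statement's English description precedes it below -/
import Mathlib

section
/- Let k be a field, d an odd integer with d ≥ 5, and m an integer with d+1 < m; set a = (d+1)/2. In R = k[x_1,…,x_m,z_1,z_2] let I = I_{a,2,m−1} + x_1x_m·I_{a−1,3,m−2} and J = I_{a−1,2,m−2} + z_1z_2·I_{a−2,3,m−3}, and let J̄ denote the image of J in R/I, an ideal of R/I regarded as an R/I-module. Then: (1) there exists a unique R/I-linear map φ : J̄ → R/I such that φ(v + I) = 0 for every v ∈ I_{a−1,2,m−2} and φ(z_1z_2w + I) = x_1x_{m−1}x_m·w + I for every w ∈ I_{a−2,3,m−3}; and (2) the R/I-module Hom_{R/I}(J̄, R/I) is generated by the inclusion map ι : J̄ → R/I together with φ. -/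
/-- The variable `x_t` (1-indexed, for `1 ≤ t ≤ n`) of the polynomial ring
`k[x_1, …, x_n]`, realized as `MvPolynomial (Fin n) k`. -/
noncomputable def Xv (k : Type*) [Field k] (n t : ℕ) : MvPolynomial (Fin n) k :=
  if h : 1 ≤ t ∧ t ≤ n then MvPolynomial.X ⟨t - 1, by omega⟩ else 0

/-- The ideal `I_{a,p,q}` of `k[x_1, …, x_n]`, generated by the squarefree monomials
`x_{t_1} ⋯ x_{t_a}` with `p ≤ t_1 < t_2 < ⋯ < t_a ≤ q` and `t_{j+1} ≥ t_j + 2`. -/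
noncomputable def idealI (k : Type*) [Field k] (n a p q : ℕ) :
    Ideal (MvPolynomial (Fin n) k) :=
  Ideal.span { f | ∃ t : ℕ → ℕ, p ≤ t 0 ∧ t (a - 1) ≤ q ∧
    (∀ j, j + 1 < a → t j + 2 ≤ t (j + 1)) ∧
    f = ∏ j ∈ Finset.range a, Xv k n (t j) }

set_option synthInstance.maxHeartbeats 1000000
set_option maxHeartbeats 1000000


def CStab (N : ℕ) (s : Finset ℕ) : Prop :=
  (∀ x ∈ s, x < N) ∧ (∀ x ∈ s, x + 1 ∉ s) ∧ (0 ∈ s → N - 1 ∉ s)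

def CGood (N a : ℕ) (B : Finset ℕ) : Prop :=
  ∀ s ⊆ B, CStab N s → s.card ≤ a

lemma CGood.mono {N a : ℕ} {B C : Finset ℕ} (h : CGood N a C) (hBC : B ⊆ C) : CGood N a B :=
  fun s hs => h s (hs.trans hBC)

lemma stable_card_le {s : Finset ℕ} (hs : ∀ x ∈ s, x + 1 ∉ s) (p q : ℕ)
    (hpq : ∀ x ∈ s, p ≤ x ∧ x < q) : 2 * s.card ≤ q + 1 - p := by
  classical
  have hd : Disjoint s (s.image (· + 1)) := by
    rw [Finset.disjoint_left]
    intro x hx hx'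
    obtain ⟨y, hy, rfl⟩ := Finset.mem_image.1 hx'
    exact hs y hy hx
  have hc : (s.image (· + 1)).card = s.card :=
    Finset.card_image_of_injective _ (add_left_injective 1)
  have hsub : s ∪ s.image (· + 1) ⊆ Finset.Ico p (q + 1) := by
    intro x hx
    rw [Finset.mem_union, Finset.mem_image] at hx
    rw [Finset.mem_Ico]
    rcases hx with hx | ⟨y, hy, rfl⟩
    · have := hpq x hx; omega
    · have := hpq y hy; omega
  have := Finset.card_le_card hsub
  rw [Finset.card_union_of_disjoint hd, hc, Nat.card_Ico] at this
  omega

lemma card_split (s : Finset ℕ) (p : ℕ) :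
    s.card = (s.filter (· < p)).card + (s.filter (p ≤ ·)).card := by
  have := Finset.card_filter_add_card_filter_not (s := s) (fun x => x < p)
  simp only [not_lt] at this
  exact this.symm

lemma card_split' (s : Finset ℕ) (y : ℕ) (hy : y ∉ s) :
    s.card = (s.filter (· < y)).card + (s.filter (y < ·)).card := by
  rw [card_split s y]
  congr 2
  ext x
  simp only [Finset.mem_filter]
  constructor
  · rintro ⟨h1, h2⟩
    refine ⟨h1, lt_of_le_of_ne h2 ?_⟩
    rintro rfl; exact hy h1
  · rintro ⟨h1, h2⟩; exact ⟨h1, h2.le⟩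

lemma combX {N a : ℕ} (hN : 2 * a + 2 ≤ N) {B c c' : Finset ℕ} (hB : CGood N a B) (h0 : 0 ∈ B)
    (hc : c ⊆ B) (hc' : c' ⊆ B) (hs : ∀ x ∈ c, x + 1 ∉ c) (hs' : ∀ x ∈ c', x + 1 ∉ c')
    (hr : ∀ x ∈ c, 2 ≤ x ∧ x < N) (hr' : ∀ x ∈ c', 1 ≤ x ∧ x + 1 < N)
    (hk : c.card = a) (hk' : c'.card = a) : False := by
  classical
  have key : ∀ y, y ∉ c → y ∉ c' → ¬ (1 ≤ y ∧ y < N) := by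
    intro y hy hy' hyN
    have e1 := card_split' c y hy
    have e2 := card_split' c' y hy'
    have b1 : (c'.filter (· < y) ∪ c.filter (y < ·)).card ≤ a := by
      apply hB
      · intro x; simp only [Finset.mem_union, Finset.mem_filter]
        rintro (h | h)
        · exact hc' h.1
        · exact hc h.1
      · refine ⟨?_, ?_, ?_⟩ <;> simp only [Finset.mem_union, Finset.mem_filter]
        · rintro x (h | h)
          · have := hr' x h.1; omega
          · have := hr x h.1; omega
        · rintro x (h | h) (h' | h')
          · exact hs' x h.1 h'.1
          · omega
          · omega
          · exact hs x h.1 h'.1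
        · rintro (h | h)
          · have := hr' 0 h.1; omega
          · omega
    have b2 : (insert 0 (c.filter (· < y) ∪ c'.filter (y < ·))).card ≤ a := by
      apply hB
      · intro x; simp only [Finset.mem_insert, Finset.mem_union, Finset.mem_filter]
        rintro (rfl | h | h)
        · exact h0
        · exact hc h.1
        · exact hc' h.1
      · refine ⟨?_, ?_, ?_⟩ <;> simp only [Finset.mem_insert, Finset.mem_union, Finset.mem_filter]
        · rintro x (rfl | h | h)
          · omega
          · have := hr x h.1; omega
          · have := hr' x h.1; omega
        · rintro x (rfl | h | h) (h' | h' | h')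
          · omega
          · have := hr _ h'.1; omega
          · omega
          · omega
          · exact hs x h.1 h'.1
          · have : x + 1 ≠ y := by omega
            omega
          · omega
          · omega
          · exact hs' x h.1 h'.1
        · rintro - (h | h | h)
          · omega
          · omega
          · have := hr' _ h.1; omega
    rw [Finset.card_insert_of_notMem, Finset.card_union_of_disjoint] at b2
    · rw [Finset.card_union_of_disjoint] at b1
      · omega
      · rw [Finset.disjoint_left]; intro x; simp only [Finset.mem_filter]; omega
    · rw [Finset.disjoint_left]; intro x; simp only [Finset.mem_filter]; omega
    · simp only [Finset.mem_union, Finset.mem_filter]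
      rintro (h | h)
      · have := hr _ h.1; omega
      · omega
  have hsub : Finset.Ico 1 N ⊆ c ∪ c' := by
    intro y hy
    rw [Finset.mem_Ico] at hy
    by_contra h
    rw [Finset.mem_union, not_or] at h
    exact key y h.1 h.2 hy
  have h1 := Finset.card_le_card hsub
  have h2 := Finset.card_union_le c c'
  rw [Nat.card_Ico] at h1
  omega

lemma sphere0 {N a : ℕ} (hN : 2 * a + 2 ≤ N) {B : Finset ℕ} (hr : ∀ x ∈ B, 1 ≤ x ∧ x < N)
    (hB : CGood N a (insert 0 B)) : ∃ x, x < N ∧ x ≠ 0 ∧ x ∉ B ∧ CGood N a (insert x B) := by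
  classical
  by_contra hcon
  push Not at hcon
  obtain ⟨z, hz⟩ : ((Finset.Ico 1 N) \ B).Nonempty := by
    rw [Finset.nonempty_iff_ne_empty]
    intro he
    rw [Finset.sdiff_eq_empty_iff_subset] at he
    have := hB ((Finset.range (a + 1)).image (fun j => 2 * j)) ?_ ⟨?_, ?_, ?_⟩
    · rw [Finset.card_image_of_injective _ (fun x y h => by simpa using h), Finset.card_range] at this
      omega
    · intro x hx
      obtain ⟨j, hj, rfl⟩ := Finset.mem_image.1 hx
      rw [Finset.mem_range] at hj
      rcases Nat.eq_zero_or_pos j with rfl | h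
      · simp
      · exact Finset.mem_insert_of_mem (he (Finset.mem_Ico.2 (by omega)))
    all_goals simp only [Finset.mem_image, Finset.mem_range]
    · rintro x ⟨j, hj, rfl⟩; omega
    · rintro x ⟨j, hj, rfl⟩ ⟨j', hj', h⟩; omega
    · rintro - ⟨j', hj', h⟩; omega
  have hne : ((Finset.Ico 1 N) \ B).Nonempty := ⟨z, hz⟩
  set l := ((Finset.Ico 1 N) \ B).min' hne with hl
  set r := ((Finset.Ico 1 N) \ B).max' hne with hrr
  have hlm := Finset.min'_mem _ hne
  have hrm := Finset.max'_mem _ hne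
  rw [← hl] at hlm
  rw [← hrr] at hrm
  rw [Finset.mem_sdiff, Finset.mem_Ico] at hlm hrm
  have hlB : ∀ x, 1 ≤ x → x < l → x ∈ B := by
    intro x h1 h2
    by_contra h
    have := Finset.min'_le ((Finset.Ico 1 N) \ B) x (by
      rw [Finset.mem_sdiff, Finset.mem_Ico]; exact ⟨by omega, h⟩)
    omega
  have hrB : ∀ x, r < x → x < N → x ∈ B := by
    intro x h1 h2
    by_contra h
    have := Finset.le_max' ((Finset.Ico 1 N) \ B) x (by
      rw [Finset.mem_sdiff, Finset.mem_Ico]; exact ⟨by omega, h⟩)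
    omega
  have main : ∀ x, x < N → x ≠ 0 → x ∉ B → ∃ s ⊆ insert x B, CStab N s ∧ s.card = a + 1 ∧ x ∈ s ∧
      0 ∉ s := by
    intro x h1 h2 h3
    have := hcon x h1 h2 h3
    unfold CGood at this
    push Not at this
    obtain ⟨s, hs, hst, hc⟩ := this
    have hx : x ∈ s := by
      by_contra hx
      have : s ⊆ insert 0 B := by
        intro y hy
        have := hs hy
        rw [Finset.mem_insert] at this ⊢
        rcases this with rfl | h
        · exact absurd hy hx
        · exact Or.inr h
      have := hB s this hst
      omega
    obtain ⟨s', hs', hs'', hc'⟩ := Finset.exists_subsuperset_card_eq (s := {x}) (t := s) (n := a + 1)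
      (by simpa using hx) (by simp) (by omega)
    refine ⟨s', hs''.trans hs, ⟨fun y hy => hst.1 y (hs'' hy),
      fun y hy h => hst.2.1 y (hs'' hy) (hs'' h), fun y h => hst.2.2 (hs'' y) (hs'' h)⟩, hc',
      by simpa using hs', ?_⟩
    intro h0
    have := hs (hs'' h0)
    rw [Finset.mem_insert] at this
    rcases this with h | h
    · exact h2 h.symm
    · have := hr 0 h; omega
  obtain ⟨s, hsB, hst, hsc, hls, h0s⟩ := main l hlm.1.2 (by omega) hlm.2
  obtain ⟨s', hsB', hst', hsc', hrs, h0s'⟩ := main r hrm.1.2 (by omega) hrm.2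
  have hsB : ∀ x ∈ s, x ≠ l → x ∈ B := fun x hx hne => by
    have := hsB hx; rw [Finset.mem_insert] at this; tauto
  have hsB' : ∀ x ∈ s', x ≠ r → x ∈ B := fun x hx hne => by
    have := hsB' hx; rw [Finset.mem_insert] at this; tauto
  have hs1 : ∀ x ∈ s, 1 ≤ x := fun x hx => by
    rcases Nat.eq_zero_or_pos x with rfl | h
    · exact absurd hx h0s
    · exact h
  have hs1' : ∀ x ∈ s', 1 ≤ x := fun x hx => by
    rcases Nat.eq_zero_or_pos x with rfl | h
    · exact absurd hx h0s'
    · exact h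
  have hsl : l - 1 ∉ s := fun h => hst.2.1 _ h (by rwa [Nat.sub_add_cancel (by omega)])
  have hsr : r + 1 ∉ s' := fun h => hst'.2.1 _ hrs h
  refine combX hN (c := (s.filter (· < l)).image (· + 1) ∪ s.filter (l < ·))
    (c' := (s'.filter (r < ·)).image (· - 1) ∪ s'.filter (· < r)) hB (by simp) ?_ ?_ ?_ ?_ ?_ ?_ ?_ ?_
  · intro x hx
    simp only [Finset.mem_union, Finset.mem_image, Finset.mem_filter] at hx
    apply Finset.mem_insert_of_mem
    rcases hx with ⟨y, ⟨hy, hyl⟩, rfl⟩ | ⟨h1, h2⟩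
    · apply hlB _ (by omega)
      have : y ≠ l - 1 := by rintro rfl; exact hsl hy
      omega
    · exact hsB x h1 (by omega)
  · intro x hx
    simp only [Finset.mem_union, Finset.mem_image, Finset.mem_filter] at hx
    apply Finset.mem_insert_of_mem
    rcases hx with ⟨y, ⟨hy, hyl⟩, rfl⟩ | ⟨h1, h2⟩
    · have : y ≠ r + 1 := by rintro rfl; exact hsr hy
      have := hst'.1 y hy
      apply hrB _ (by omega) (by omega)
    · exact hsB' x h1 (by omega)
  · intro x hx hx'
    simp only [Finset.mem_union, Finset.mem_image, Finset.mem_filter] at hx hx'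
    rcases hx with ⟨y, ⟨hy, hyl⟩, rfl⟩ | ⟨h1, h2⟩
    · have : y ≠ l - 1 := by rintro rfl; exact hsl hy
      rcases hx' with ⟨z, ⟨hz, hzl⟩, h⟩ | ⟨h1, h2⟩
      · exact hst.2.1 y hy (by convert hz using 1; omega)
      · omega
    · rcases hx' with ⟨z, ⟨hz, hzl⟩, h⟩ | ⟨h1', h2'⟩
      · omega
      · exact hst.2.1 x h1 h1'
  · intro x hx hx'
    simp only [Finset.mem_union, Finset.mem_image, Finset.mem_filter] at hx hx'
    rcases hx with ⟨y, ⟨hy, hyl⟩, rfl⟩ | ⟨h1, h2⟩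
    · have : y ≠ r + 1 := by rintro rfl; exact hsr hy
      rcases hx' with ⟨z, ⟨hz, hzl⟩, h⟩ | ⟨h1, h2⟩
      · exact hst'.2.1 y hy (by convert hz using 1; omega)
      · omega
    · rcases hx' with ⟨z, ⟨hz, hzl⟩, h⟩ | ⟨h1', h2'⟩
      · have : z ≠ r + 1 := by rintro rfl; exact hsr hz
        omega
      · exact hst'.2.1 x h1 h1'
  · intro x hx
    simp only [Finset.mem_union, Finset.mem_image, Finset.mem_filter] at hx
    rcases hx with ⟨y, ⟨hy, hyl⟩, rfl⟩ | ⟨h1, h2⟩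
    · have := hs1 y hy; omega
    · have := hst.1 x h1; omega
  · intro x hx
    simp only [Finset.mem_union, Finset.mem_image, Finset.mem_filter] at hx
    rcases hx with ⟨y, ⟨hy, hyl⟩, rfl⟩ | ⟨h1, h2⟩
    · have := hst'.1 y hy
      have : y ≠ r + 1 := by rintro rfl; exact hsr hy
      omega
    · have := hs1' x h1; omega
  · rw [Finset.card_union_of_disjoint, Finset.card_image_of_injective _ (add_left_injective 1)]
    · have h := Finset.card_erase_of_mem hls
      rw [card_split' (s.erase l) l (by simp)] at h
      have e1 : (s.erase l).filter (· < l) = s.filter (· < l) := by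
        ext x; simp only [Finset.mem_filter, Finset.mem_erase]; constructor
        · tauto
        · rintro ⟨h1, h2⟩; exact ⟨⟨by omega, h1⟩, h2⟩
      have e2 : (s.erase l).filter (l < ·) = s.filter (l < ·) := by
        ext x; simp only [Finset.mem_filter, Finset.mem_erase]; constructor
        · tauto
        · rintro ⟨h1, h2⟩; exact ⟨⟨by omega, h1⟩, h2⟩
      rw [e1, e2] at h; omega
    · rw [Finset.disjoint_left]; intro x
      simp only [Finset.mem_image, Finset.mem_filter]
      rintro ⟨y, h1, rfl⟩ h2; omega
  · rw [Finset.card_union_of_disjoint, Finset.card_image_of_injOn]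
    · have h := Finset.card_erase_of_mem hrs
      rw [card_split' (s'.erase r) r (by simp)] at h
      have e1 : (s'.erase r).filter (· < r) = s'.filter (· < r) := by
        ext x; simp only [Finset.mem_filter, Finset.mem_erase]; constructor
        · tauto
        · rintro ⟨h1, h2⟩; exact ⟨⟨by omega, h1⟩, h2⟩
      have e2 : (s'.erase r).filter (r < ·) = s'.filter (r < ·) := by
        ext x; simp only [Finset.mem_filter, Finset.mem_erase]; constructor
        · tauto
        · rintro ⟨h1, h2⟩; exact ⟨⟨by omega, h1⟩, h2⟩
      rw [e1, e2] at h; omega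
    · intro x hx y hy h
      simp only [Finset.coe_filter, Set.mem_ofPred_eq] at hx hy h
      omega
    · rw [Finset.disjoint_left]; intro x
      simp only [Finset.mem_image, Finset.mem_filter]
      rintro ⟨y, h1, rfl⟩ h2; omega

def rotN (N c x : ℕ) : ℕ := if x + c < N then x + c else x + c - N

lemma rotN_lt {N c x : ℕ} (hc : c ≤ N) (hx : x < N) : rotN N c x < N := by
  unfold rotN; split_ifs <;> omega

lemma rotN_inv {N c x : ℕ} (hc : c ≤ N) (hx : x < N) : rotN N (N - c) (rotN N c x) = x := by
  unfold rotN; split_ifs <;> omega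

lemma CGood.rot {N a c : ℕ} (hN : 2 ≤ N) (hc : c ≤ N) {B : Finset ℕ} (hr : ∀ x ∈ B, x < N)
    (hB : CGood N a B) : CGood N a (B.image (rotN N c)) := by
  classical
  intro s hs hst
  have hinj : Set.InjOn (rotN N (N - c)) (s : Set ℕ) := by
    intro x hx y hy h
    have h1 := rotN_inv (c := N - c) (by omega) (hst.1 x hx)
    have h2 := rotN_inv (c := N - c) (by omega) (hst.1 y hy)
    rw [← h1, ← h2, h]
  rw [← Finset.card_image_of_injOn hinj]
  apply hB
  · intro x hx
    obtain ⟨y, hy, rfl⟩ := Finset.mem_image.1 hx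
    obtain ⟨z, hz, rfl⟩ := Finset.mem_image.1 (hs hy)
    rwa [rotN_inv hc (hr z hz)]
  · refine ⟨?_, ?_, ?_⟩ <;> simp only [Finset.mem_image]
    · rintro _ ⟨y, hy, rfl⟩; exact rotN_lt (by omega) (hst.1 y hy)
    · rintro _ ⟨y, hy, rfl⟩ ⟨z, hz, h⟩
      have h1 := hst.1 y hy
      have h2 := hst.1 z hz
      have h3 := hst.2.1 y hy
      have h4 := hst.2.2
      have : z = y + 1 ∨ (z = 0 ∧ y = N - 1) := by
        unfold rotN at h; split_ifs at h <;> omega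
      rcases this with rfl | ⟨rfl, rfl⟩
      · exact h3 hz
      · exact h4 hz hy
    · rintro ⟨y, hy, h⟩ ⟨z, hz, h'⟩
      have h1 := hst.1 y hy
      have h2 := hst.1 z hz
      have h4 := hst.2.2
      have : y = z + 1 ∨ (y = 0 ∧ z = N - 1) := by
        unfold rotN at h h'; split_ifs at h h' <;> omega
      rcases this with rfl | ⟨rfl, rfl⟩
      · exact hst.2.1 z hz hy
      · exact h4 hy hz

lemma sphere1 {N a u : ℕ} (hN : 2 * a + 2 ≤ N) (hu : u < N) {B : Finset ℕ} (huB : u ∉ B)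
    (hr : ∀ x ∈ B, x < N)
    (hB : CGood N a (insert u B)) : ∃ x, x < N ∧ x ≠ u ∧ x ∉ B ∧ CGood N a (insert x B) := by
  classical
  have h1 := hB.rot (by omega) (c := N - u) (by omega) (by
    intro x hx; rw [Finset.mem_insert] at hx; rcases hx with rfl | h
    · exact hu
    · exact hr x h)
  rw [Finset.image_insert] at h1
  have h0 : rotN N (N - u) u = 0 := by unfold rotN; split_ifs <;> omega
  rw [h0] at h1
  have hr' : ∀ x ∈ B.image (rotN N (N - u)), 1 ≤ x ∧ x < N := by
    intro x hx
    obtain ⟨y, hy, rfl⟩ := Finset.mem_image.1 hx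
    refine ⟨?_, rotN_lt (by omega) (hr y hy)⟩
    have : y ≠ u := by rintro rfl; exact huB hy
    have := hr y hy
    unfold rotN; split_ifs <;> omega
  obtain ⟨x, hx, hx0, hxB, hg⟩ := sphere0 hN hr' h1
  have h2 := hg.rot (by omega) (c := u) (by omega) (by
    intro y hy; rw [Finset.mem_insert] at hy; rcases hy with rfl | h
    · exact hx
    · exact (hr' y h).2)
  rw [Finset.image_insert, Finset.image_image] at h2
  have hid : ∀ y, y < N → rotN N u (rotN N (N - u) y) = y := by
    intro y hy
    have := rotN_inv (N := N) (c := N - u) (x := y) (by omega) hy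
    rwa [show N - (N - u) = u by omega] at this
  have himg : B.image (rotN N u ∘ rotN N (N - u)) = B := by
    ext y
    rw [Finset.mem_image]
    constructor
    · rintro ⟨z, hz, rfl⟩
      simp only [Function.comp]
      rwa [hid z (hr z hz)]
    · intro hy
      exact ⟨y, hy, hid y (hr y hy)⟩
  rw [himg] at h2
  refine ⟨_, rotN_lt (by omega) hx, ?_, ?_, h2⟩
  · unfold rotN; split_ifs <;> omega
  · intro h
    apply hxB
    rw [Finset.mem_image]
    exact ⟨_, h, by rw [rotN_inv (by omega) hx]⟩

lemma sphere {N a u : ℕ} (hN : 2 * a + 2 ≤ N) (hu : u < N) (B : Finset ℕ) (huB : u ∉ B)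
    (hr : ∀ x ∈ B, x < N) (hB : CGood N a B) :
    ∃ C, B ⊆ C ∧ u ∉ C ∧ (∀ x ∈ C, x < N) ∧ CGood N a C ∧ ¬ CGood N a (insert u C) := by
  classical
  induction hn : N - B.card using Nat.strong_induction_on generalizing B with
  | _ n ih =>
    by_cases h : CGood N a (insert u B)
    · obtain ⟨x, hx, hxu, hxB, hg⟩ := sphere1 hN hu huB hr h
      have hlt : ∀ y ∈ insert x B, y < N := by
        intro y hy; rw [Finset.mem_insert] at hy; rcases hy with rfl | h
        · exact hx
        · exact hr y h
      have hcard : (insert x B).card ≤ N := by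
        have := Finset.card_le_card (s := insert x B) (t := Finset.range N)
          (fun y hy => Finset.mem_range.2 (hlt y hy))
        simpa using this
      have hc := Finset.card_insert_of_notMem hxB
      obtain ⟨C, h1, h2, h3, h4, h5⟩ := ih (N - (insert x B).card) (by omega) (insert x B)
        (by rw [Finset.mem_insert]; tauto) hlt hg rfl
      exact ⟨C, (Finset.subset_insert _ _).trans h1, h2, h3, h4, h5⟩
    · exact ⟨B, subset_rfl, huB, hr, hB, h⟩

def Adm (lo hi n : ℕ) (v : Finset ℕ) : Prop :=
  (∀ x ∈ v, lo ≤ x ∧ x ≤ hi) ∧ (∀ x ∈ v, x + 1 ∉ v) ∧ v.card = n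

def Extra (N a lo hi n : ℕ) (b : Finset ℕ) : Prop :=
  ∀ s : Finset ℕ, CStab N s → s ⊆ b ∪ Finset.range (N - 1) → ∃ e1 e2 : Finset ℕ,
    e1 ⊆ b ∧ e2 ⊆ b ∧ e1.card + e2.card + n = a ∧
    (∀ x ∈ e1, x + 2 ≤ lo) ∧ (∀ x ∈ e2, hi + 2 ≤ x ∧ x < N) ∧
    (∀ x ∈ e1, x + 1 ∉ e1) ∧ (∀ x ∈ e2, x + 1 ∉ e2) ∧
    (0 ∈ e1 → N - 1 ∉ s) ∧ (0 ∈ s → N - 1 ∉ e2)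

lemma descent {N a lo hi n : ℕ} (hlo : 2 ≤ lo) (hhi : hi + 2 ≤ N) {b v u : Finset ℕ}
    (hE : Extra N a lo hi n b)
    (hv : Adm lo hi n v) (hu : Adm lo hi n u)
    (gv : CGood N a (b ∪ v)) (gu : CGood N a (b ∪ u)) {e : ℕ} (hev : e ∈ v) (heu : e ∉ u)
    (hag : ∀ x, e < x → (x ∈ v ↔ x ∈ u)) :
    ∃ p ∈ v, lo + 1 ≤ p ∧ p - 2 ∉ v ∧ CGood N a (insert (p - 1) (b ∪ v)) := by
  classical
  have hex : ∃ p, p ∈ v ∧ ∃ k, p + 2 * k = e ∧ ∀ j ≤ k, p + 2 * j ∈ v :=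
    ⟨e, hev, 0, by simp, by intro j hj; obtain rfl : j = 0 := by omega
                            simpa using hev⟩
  set p := Nat.find hex with hp
  obtain ⟨hpv, k, hk, hrun⟩ := Nat.find_spec hex
  rw [← hp] at hpv hk hrun
  have hlp : lo ≤ p := (hv.1 p hpv).1
  have hp2 : p - 2 ∉ v := by
    intro h
    have := Nat.find_min hex (m := p - 2) (by omega)
    apply this
    refine ⟨h, k + 1, by omega, ?_⟩
    intro j hj
    rcases Nat.eq_zero_or_pos j with rfl | hj0
    · simpa using h
    · have := hrun (j - 1) (by omega)
      convert this using 1; omega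
  have heh := (hv.1 e hev).2
  -- counting
  have c1 : (u.filter (· < p)).card ≥ (v.filter (· < p)).card + 1 := by
    have a1 := card_split u p
    have a2 := card_split v p
    have a3 := card_split (u.filter (p ≤ ·)) (e + 1)
    have a4 := card_split (v.filter (p ≤ ·)) (e + 1)
    have a5 : (u.filter (p ≤ ·)).filter (e + 1 ≤ ·) = (v.filter (p ≤ ·)).filter (e + 1 ≤ ·) := by
      ext x
      simp only [Finset.mem_filter]
      constructor
      · rintro ⟨⟨h1, h2⟩, h3⟩; exact ⟨⟨(hag x (by omega)).2 h1, h2⟩, h3⟩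
      · rintro ⟨⟨h1, h2⟩, h3⟩; exact ⟨⟨(hag x (by omega)).1 h1, h2⟩, h3⟩
    have a6 := stable_card_le (s := (u.filter (p ≤ ·)).filter (· < e + 1)) (by
      intro x hx hx'
      simp only [Finset.mem_filter] at hx hx'
      exact hu.2.1 x hx.1.1 hx'.1.1) p e (by
      intro x hx
      simp only [Finset.mem_filter] at hx
      have : x ≠ e := by rintro rfl; exact heu hx.1.1
      omega)
    have a7 : ((Finset.range (k + 1)).image (fun j => p + 2 * j)).card ≤
        ((v.filter (p ≤ ·)).filter (· < e + 1)).card := by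
      apply Finset.card_le_card
      intro x hx
      obtain ⟨j, hj, rfl⟩ := Finset.mem_image.1 hx
      rw [Finset.mem_range] at hj
      simp only [Finset.mem_filter]
      exact ⟨⟨hrun j (by omega), by omega⟩, by omega⟩
    rw [Finset.card_image_of_injective _ (fun x y h => by simpa using h), Finset.card_range] at a7
    rw [a5] at a3
    have := hv.2.2
    have := hu.2.2
    omega
  have hlp1 : lo + 1 ≤ p := by
    have : (u.filter (· < p)).Nonempty := by
      rw [← Finset.card_pos]; omega
    obtain ⟨x, hx⟩ := this
    rw [Finset.mem_filter] at hx
    have := hu.1 x hx.1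
    omega
  refine ⟨p, hpv, hlp1, hp2, ?_⟩
  intro s hs hst
  by_contra hcard
  push Not at hcard
  have hts : p - 1 ∈ s := by
    by_contra h
    have := gv s (by
      intro x hx
      have := hs hx
      rw [Finset.mem_insert] at this
      rcases this with rfl | h'
      · exact absurd hx h
      · exact h') hst
    omega
  have hps : p ∉ s := fun h => hst.2.1 _ hts (by rwa [Nat.sub_add_cancel (by omega)])
  have hp2s : p - 2 ∉ s := fun h => hst.2.1 _ h (by rwa [show p - 2 + 1 = p - 1 by omega])
  have hsbv : ∀ x ∈ s, x ≠ p - 1 → x ∈ b ∪ v := by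
    intro x hx hne
    have := hs hx
    rw [Finset.mem_insert] at this
    tauto
  -- split of s
  have s1 := card_split s (p - 1)
  have s2 := card_split (s.filter (p - 1 ≤ ·)) p
  have s3 : ((s.filter (p - 1 ≤ ·)).filter (· < p)).card ≤ 1 := by
    have : (s.filter (p - 1 ≤ ·)).filter (· < p) ⊆ {p - 1} := by
      intro x hx
      simp only [Finset.mem_filter] at hx
      rw [Finset.mem_singleton]; omega
    simpa using Finset.card_le_card this
  have s4 : (s.filter (p - 1 ≤ ·)).filter (p ≤ ·) = s.filter (p ≤ ·) := by
    ext x; simp only [Finset.mem_filter]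
    constructor
    · tauto
    · rintro ⟨h1, h2⟩; exact ⟨⟨h1, by omega⟩, h2⟩
  rw [s4] at s2
  have hrs : ∀ j ≤ k, p + 2 * j + 1 ∈ s := by
    intro j hj
    by_contra hjs
    have b1 : (s.filter (· < p - 1) ∪ ((Finset.range (j + 1)).image (fun j => p + 2 * j) ∪
        s.filter (p + 2 * j + 2 ≤ ·))).card ≤ a := by
      apply gv
      · intro x hx
        simp only [Finset.mem_union, Finset.mem_filter, Finset.mem_image, Finset.mem_range] at hx
        rcases hx with h | ⟨i, hi, rfl⟩ | h
        · exact hsbv x h.1 (by omega)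
        · exact Finset.mem_union_right _ (hrun i (by omega))
        · exact hsbv x h.1 (by omega)
      · refine ⟨?_, ?_, ?_⟩ <;>
          simp only [Finset.mem_union, Finset.mem_filter, Finset.mem_image, Finset.mem_range]
        · rintro x (h | ⟨i, hi, rfl⟩ | h)
          · exact hst.1 x h.1
          · omega
          · exact hst.1 x h.1
        · rintro x (h | ⟨i, hi, rfl⟩ | h) (h' | ⟨i', hi', h'⟩ | h')
          · exact hst.2.1 x h.1 h'.1
          · obtain rfl : x = p - 1 := by omega
            omega
          · omega
          · omega
          · omega
          · omega
          · omega
          · omega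
          · exact hst.2.1 x h.1 h'.1
        · rintro (h | ⟨i, hi, h⟩ | h) (h' | ⟨i', hi', h'⟩ | h')
          · exact hst.2.2 h.1 h'.1
          · omega
          · exact hst.2.2 h.1 h'.1
          all_goals omega
    rw [Finset.card_union_of_disjoint, Finset.card_union_of_disjoint,
      Finset.card_image_of_injective _ (fun x y h => by simpa using h), Finset.card_range] at b1
    · have b2 := card_split (s.filter (p ≤ ·)) (p + 2 * j + 2)
      have b3 : (s.filter (p ≤ ·)).filter (p + 2 * j + 2 ≤ ·) = s.filter (p + 2 * j + 2 ≤ ·) := by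
        ext x; simp only [Finset.mem_filter]
        constructor
        · tauto
        · rintro ⟨h1, h2⟩; exact ⟨⟨h1, by omega⟩, h2⟩
      rw [b3] at b2
      have b4 := stable_card_le (s := (s.filter (p ≤ ·)).filter (· < p + 2 * j + 2)) (by
        intro x hx hx'
        simp only [Finset.mem_filter] at hx hx'
        exact hst.2.1 x hx.1.1 hx'.1.1) (p + 1) (p + 2 * j + 1) (by
        intro x hx
        simp only [Finset.mem_filter] at hx
        have : x ≠ p := by rintro rfl; exact hps hx.1.1
        have : x ≠ p + 2 * j + 1 := by rintro rfl; exact hjs hx.1.1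
        omega)
      omega
    · rw [Finset.disjoint_left]; intro x
      simp only [Finset.mem_image, Finset.mem_filter, Finset.mem_range]
      rintro ⟨y, h1, rfl⟩ h2; omega
    · rw [Finset.disjoint_left]; intro x
      simp only [Finset.mem_image, Finset.mem_filter, Finset.mem_union, Finset.mem_range]
      rintro h (⟨y, h1, rfl⟩ | h2) <;> omega
  have hsN : s ⊆ b ∪ Finset.range (N - 1) := by
    intro x hx
    rw [Finset.mem_union, Finset.mem_range]
    have hpN := (hv.1 p hpv).2
    have := hs hx
    rw [Finset.mem_insert, Finset.mem_union] at this
    rcases this with rfl | h | h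
    · right; omega
    · exact Or.inl h
    · have := (hv.1 x h).2
      right; omega
  obtain ⟨e1, e2, he1, he2, hec, hl1, hl2, hs1, hs2, hz1, hz2⟩ := hE s hst hsN
  have t1 : (e1 ∪ (u.filter (· < p) ∪ s.filter (p ≤ ·))).card ≤ a := by
    apply gu
    · intro x hx
      simp only [Finset.mem_union, Finset.mem_filter] at hx
      rcases hx with h | h | ⟨h, hpx⟩
      · exact Finset.mem_union_left _ (he1 h)
      · exact Finset.mem_union_right _ h.1
      · have := hsbv x h (by omega)
        rw [Finset.mem_union] at this ⊢
        rcases this with h' | h'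
        · exact Or.inl h'
        · right
          by_cases hxe : e < x
          · exact (hag x hxe).1 h'
          · exfalso
            have hxp : x ≠ p := by rintro rfl; exact hps h
            rcases Nat.even_or_odd' (x - p) with ⟨j, hj | hj⟩
            · exact hst.2.1 _ (hrs (j - 1) (by omega)) (by convert h using 1; omega)
            · exact hv.2.1 _ (hrun j (by omega)) (by convert h' using 1; omega)
    · refine ⟨?_, ?_, ?_⟩ <;> simp only [Finset.mem_union, Finset.mem_filter]
      · rintro x (h | h | h)
        · have := hl1 x h; omega
        · omega
        · exact hst.1 x h.1
      · rintro x (h | h | h) (h' | h' | h')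
        · exact hs1 x h h'
        · have := hl1 x h; have := hu.1 _ h'.1; omega
        · have := hl1 x h; omega
        · have := hl1 _ h'; have := hu.1 _ h.1; omega
        · exact hu.2.1 x h.1 h'.1
        · have : x + 1 ≠ p := by rintro h''; rw [h''] at h'; exact hps h'.1
          omega
        · have := hl1 _ h'; omega
        · omega
        · exact hst.2.1 x h.1 h'.1
      · rintro (h | h | h) (h' | h' | h')
        · have := hl1 _ h'; omega
        · omega
        · exact hz1 h h'.1
        · have := hl1 _ h'; omega
        · omega
        · have := hu.1 _ h.1; omega
        · omega
        · omega
        · omega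
  have t2 : (e2 ∪ (s.filter (· < p - 1) ∪ v.filter (p ≤ ·))).card ≤ a := by
    apply gv
    · intro x hx
      simp only [Finset.mem_union, Finset.mem_filter] at hx
      rcases hx with h | h | ⟨h, hpx⟩
      · exact Finset.mem_union_left _ (he2 h)
      · exact hsbv x h.1 (by omega)
      · exact Finset.mem_union_right _ h
    · refine ⟨?_, ?_, ?_⟩ <;> simp only [Finset.mem_union, Finset.mem_filter]
      · rintro x (h | h | h)
        · exact (hl2 x h).2
        · exact hst.1 x h.1
        · have := hv.1 x h.1; omega
      · rintro x (h | h | h) (h' | h' | h')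
        · exact hs2 x h h'
        · have := hl2 x h; omega
        · have := hl2 x h; have := hv.1 _ h'.1; omega
        · have := hl2 _ h'; omega
        · exact hst.2.1 x h.1 h'.1
        · omega
        · have := hl2 _ h'; have := hv.1 _ h.1; omega
        · omega
        · exact hv.2.1 x h.1 h'.1
      · rintro (h | h | h) (h' | h' | h')
        · have := hl2 _ h; omega
        · omega
        · have := hl2 _ h; omega
        · exact hz2 h.1 h'
        · omega
        · have := hv.1 _ h'.1; omega
        · omega
        · omega
        · omega
  have v2 := card_split v p
  have := hv.2.2
  have d1 : Disjoint (u.filter (· < p)) (s.filter (p ≤ ·)) := by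
    rw [Finset.disjoint_left]; intro x
    simp only [Finset.mem_filter]; omega
  have d2 : Disjoint e1 (u.filter (· < p) ∪ s.filter (p ≤ ·)) := by
    rw [Finset.disjoint_left]; intro x
    simp only [Finset.mem_filter, Finset.mem_union]
    intro h; have := hl1 _ h; rintro (h' | h')
    · have := hu.1 _ h'.1; omega
    · omega
  have d3 : Disjoint (s.filter (· < p - 1)) (v.filter (p ≤ ·)) := by
    rw [Finset.disjoint_left]; intro x
    simp only [Finset.mem_filter]; omega
  have d4 : Disjoint e2 (s.filter (· < p - 1) ∪ v.filter (p ≤ ·)) := by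
    rw [Finset.disjoint_left]; intro x
    simp only [Finset.mem_filter, Finset.mem_union]
    intro h; have := hl2 _ h; rintro (h' | h')
    · have := (hv.1 p hpv).2; omega
    · have := hv.1 _ h'.1; omega
  rw [Finset.card_union_of_disjoint d2, Finset.card_union_of_disjoint d1] at t1
  rw [Finset.card_union_of_disjoint d4, Finset.card_union_of_disjoint d3] at t2
  omega

lemma connected {N a lo hi n : ℕ} (hlo : 2 ≤ lo) (hhi : hi + 2 ≤ N) {b : Finset ℕ}
    (hE : Extra N a lo hi n b) {β : Type*} (g : Finset ℕ → β)
    (hg : ∀ v u, Adm lo hi n v → Adm lo hi n u → CGood N a (b ∪ v ∪ u) → g v = g u) :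
    ∀ v u, Adm lo hi n v → Adm lo hi n u → CGood N a (b ∪ v) → CGood N a (b ∪ u) → g v = g u := by
  classical
  have main : ∀ M, ∀ v u : Finset ℕ, ∑ x ∈ v, x + ∑ x ∈ u, x = M → Adm lo hi n v → Adm lo hi n u →
      CGood N a (b ∪ v) → CGood N a (b ∪ u) → g v = g u := by
    intro M
    induction M using Nat.strong_induction_on with
    | _ M ih =>
      have step : ∀ v u : Finset ℕ, ∑ x ∈ v, x + ∑ x ∈ u, x = M → Adm lo hi n v → Adm lo hi n u →
          CGood N a (b ∪ v) → CGood N a (b ∪ u) → ∀ e, e ∈ v → e ∉ u →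
          (∀ x, e < x → (x ∈ v ↔ x ∈ u)) → g v = g u := by
        intro v u hM hv hu gv gu e hev heu hag
        obtain ⟨p, hpv, hlp, hp2, hgood⟩ := descent hlo hhi hE hv hu gv gu hev heu hag
        have hp1 : p - 1 ∉ v := fun h => hv.2.1 _ h (by rwa [Nat.sub_add_cancel (by omega)])
        have hp1' : p - 1 ∉ v.erase p := fun h => hp1 (Finset.mem_of_mem_erase h)
        have hadm : Adm lo hi n (insert (p - 1) (v.erase p)) := by
          refine ⟨?_, ?_, ?_⟩
          · intro x hx
            rw [Finset.mem_insert, Finset.mem_erase] at hx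
            have := hv.1 p hpv
            rcases hx with rfl | h
            · omega
            · exact hv.1 x h.2
          · intro x hx hx'
            rw [Finset.mem_insert, Finset.mem_erase] at hx hx'
            rcases hx with rfl | h <;> rcases hx' with h' | h'
            · omega
            · omega
            · exact hp2 (by convert h.2 using 1; omega)
            · exact hv.2.1 x h.2 h'.2
          · rw [Finset.card_insert_of_notMem hp1', Finset.card_erase_of_mem hpv]
            have := Finset.card_pos.2 ⟨p, hpv⟩
            have := hv.2.2
            omega
        have e1 : g v = g (insert (p - 1) (v.erase p)) := by
          apply hg _ _ hv hadm
          apply hgood.mono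
          intro x
          simp only [Finset.mem_insert, Finset.mem_union, Finset.mem_erase]
          tauto
        rw [e1]
        refine ih _ ?_ _ _ rfl hadm hu ?_ gu
        · rw [Finset.sum_insert hp1', ← hM]
          have := Finset.add_sum_erase v (fun x => x) hpv
          omega
        · apply hgood.mono
          intro x
          simp only [Finset.mem_insert, Finset.mem_union, Finset.mem_erase]
          tauto
      intro v u hM hv hu gv gu
      by_cases hvu : v = u
      · rw [hvu]
      · have hne : (symmDiff v u).Nonempty := by
          rw [Finset.nonempty_iff_ne_empty]
          intro h
          exact hvu (symmDiff_eq_bot.1 h)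
        have hmem := Finset.max'_mem _ hne
        have hmax : ∀ x, (symmDiff v u).max' hne < x → (x ∈ v ↔ x ∈ u) := by
          intro x hx
          have : x ∉ symmDiff v u := fun h => by
            have := Finset.le_max' _ x h; omega
          rw [Finset.mem_symmDiff] at this
          tauto
        rw [Finset.mem_symmDiff] at hmem
        rcases hmem with h | h
        · exact step v u hM hv hu gv gu _ h.1 h.2 hmax
        · exact (step u v (by omega) hu hv gu gv _ h.1 h.2 (fun x hx => (hmax x hx).symm)).symm
  intro v u
  exact main _ v u rfl

section Alg

open MvPolynomial

noncomputable def ex (n : ℕ) (s : Finset ℕ) : Fin n →₀ ℕ :=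
  Finsupp.equivFunOnFinite.symm (fun i => if i.1 + 1 ∈ s then 1 else 0)

lemma ex_apply (n : ℕ) (s : Finset ℕ) (i : Fin n) : ex n s i = if i.1 + 1 ∈ s then 1 else 0 := rfl

lemma ex_empty (n : ℕ) : ex n ∅ = 0 := by ext i; simp [ex_apply]

lemma ex_union (n : ℕ) {s t : Finset ℕ} (h : ∀ x ∈ s, x ∉ t) : ex n (s ∪ t) = ex n s + ex n t := by
  ext i
  have := h (i.1 + 1)
  simp only [ex_apply, Finsupp.add_apply, Finset.mem_union]
  split_ifs <;> simp_all

open Classical in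
noncomputable def Bs (m : ℕ) (e : Fin (m + 2) →₀ ℕ) : Finset ℕ :=
  (Finset.range (m + 1)).filter (fun t => t = 0 ∨ ∃ i : Fin (m + 2), i.1 + 1 = t ∧ e i ≠ 0)

lemma mem_Bs {m : ℕ} {e : Fin (m + 2) →₀ ℕ} {t : ℕ} :
    t ∈ Bs m e ↔ t ≤ m ∧ (t = 0 ∨ ∃ i : Fin (m + 2), i.1 + 1 = t ∧ e i ≠ 0) := by
  simp [Bs]

lemma Bs_lt {m : ℕ} {e : Fin (m + 2) →₀ ℕ} : ∀ t ∈ Bs m e, t < m + 1 := by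
  intro t ht; rw [mem_Bs] at ht; omega

lemma zero_mem_Bs {m : ℕ} (e : Fin (m + 2) →₀ ℕ) : 0 ∈ Bs m e := by simp [mem_Bs]

lemma Bs_add {m : ℕ} (e f : Fin (m + 2) →₀ ℕ) : Bs m (e + f) = Bs m e ∪ Bs m f := by
  ext t
  simp only [mem_Bs, Finset.mem_union, Finsupp.add_apply]
  constructor
  · rintro ⟨h, rfl | ⟨i, hi, h2⟩⟩
    · simp
    · by_cases he : e i = 0
      · exact Or.inr ⟨h, Or.inr ⟨i, hi, by omega⟩⟩
      · exact Or.inl ⟨h, Or.inr ⟨i, hi, by omega⟩⟩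
  · rintro (⟨h, rfl | ⟨i, hi, h2⟩⟩ | ⟨h, rfl | ⟨i, hi, h2⟩⟩)
    · simp
    · exact ⟨h, Or.inr ⟨i, hi, by omega⟩⟩
    · simp
    · exact ⟨h, Or.inr ⟨i, hi, by omega⟩⟩

lemma mem_Bs_ex {m : ℕ} {s : Finset ℕ} {t : ℕ} :
    t ∈ Bs m (ex (m + 2) s) ↔ t ≤ m ∧ (t = 0 ∨ t ∈ s) := by
  rw [mem_Bs]
  constructor
  · rintro ⟨h, rfl | ⟨i, rfl, h2⟩⟩
    · simp
    · refine ⟨h, Or.inr ?_⟩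
      by_contra hc
      exact h2 (by simp [ex_apply, hc])
  · rintro ⟨h, rfl | h2⟩
    · simp
    · refine ⟨h, ?_⟩
      rcases Nat.eq_zero_or_pos t with rfl | ht
      · simp
      · right
        refine ⟨⟨t - 1, by omega⟩, ?_, ?_⟩
        · show t - 1 + 1 = t
          omega
        · rw [ex_apply]
          have : t - 1 + 1 = t := by omega
          simp [this, h2]

lemma ex_le_iff {m : ℕ} {s : Finset ℕ} (hs : ∀ x ∈ s, 1 ≤ x ∧ x ≤ m) {e : Fin (m + 2) →₀ ℕ} :
    ex (m + 2) s ≤ e ↔ s ⊆ Bs m e := by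
  constructor
  · intro h x hx
    obtain ⟨h1, h2⟩ := hs x hx
    rw [mem_Bs]
    refine ⟨h2, Or.inr ⟨⟨x - 1, by omega⟩, ?_, ?_⟩⟩
    · show x - 1 + 1 = x
      omega
    · have := h ⟨x - 1, by omega⟩
      rw [ex_apply] at this
      have h3 : x - 1 + 1 = x := by omega
      simp only [h3, hx, if_true] at this
      omega
  · intro h i
    rw [ex_apply]
    split_ifs with h1
    · have := h h1
      rw [mem_Bs] at this
      obtain ⟨_, h0 | ⟨j, hj, h2⟩⟩ := this
      · omega
      · have : j = i := by ext; omega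
        subst this; omega
    · exact Nat.zero_le _

lemma prod_Xv (k : Type*) [Field k] (n : ℕ) (s : Finset ℕ) (hs : ∀ x ∈ s, 1 ≤ x ∧ x ≤ n) :
    ∏ x ∈ s, Xv k n x = monomial (ex n s) 1 := by
  classical
  induction s using Finset.induction_on with
  | empty => simp [ex_empty]
  | insert x s hx ih =>
    rw [Finset.prod_insert hx, ih (fun y hy => hs y (Finset.mem_insert_of_mem hy))]
    obtain ⟨h1, h2⟩ := hs x (Finset.mem_insert_self _ _)
    rw [Xv, dif_pos ⟨h1, h2⟩, X, monomial_mul, one_mul]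
    congr 1
    rw [Finset.insert_eq, ex_union n (by simpa using hx)]
    refine congrArg (fun e => monomial (e + ex n s)) ?_
    ext i
    rw [ex_apply, Finsupp.single_apply]
    have : (⟨x - 1, by omega⟩ : Fin n) = i ↔ i.1 + 1 = x := by
      rw [Fin.ext_iff]; show x - 1 = i.1 ↔ _; omega
    simp [this]

lemma idealI_eq (k : Type*) [Field k] (n a p q : ℕ) (ha : 1 ≤ a) (hp : 1 ≤ p) (hq : q ≤ n) :
    idealI k n a p q = Ideal.span ((fun e => monomial e (1 : k)) '' (ex n '' {s | Adm p q a s})) := by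
  unfold idealI
  congr 1
  ext f
  simp only [Set.mem_ofPred_eq, Set.mem_image, exists_exists_and_eq_and]
  constructor
  · rintro ⟨t, h0, h1, h2, rfl⟩
    have hmono : ∀ j i, i < j → j < a → t i + 2 ≤ t j := by
      intro j
      induction j with
      | zero => intro i hi; omega
      | succ j ih =>
        intro i hi hj
        have e1 := h2 j hj
        rcases Nat.lt_succ_iff_lt_or_eq.1 hi with h | rfl
        · have := ih i h (by omega); omega
        · exact e1
    have hinj : Set.InjOn t (Finset.range a) := by
      intro i hi j hj hij
      rw [Finset.mem_coe, Finset.mem_range] at hi hj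
      by_contra hne
      rcases Nat.lt_or_gt_of_ne hne with h | h
      · have := hmono j i h hj; omega
      · have := hmono i j h hi; omega
    have hr : ∀ j < a, p ≤ t j ∧ t j ≤ q := by
      intro j hj
      constructor
      · rcases Nat.eq_zero_or_pos j with rfl | h
        · exact h0
        · have := hmono j 0 h hj; omega
      · rcases Nat.lt_or_ge j (a - 1) with h | h
        · have := hmono (a - 1) j h (by omega); omega
        · have : j = a - 1 := by omega
          subst this; exact h1
    refine ⟨(Finset.range a).image t, ⟨?_, ?_, ?_⟩, ?_⟩
    · intro x hx
      obtain ⟨j, hj, rfl⟩ := Finset.mem_image.1 hx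
      exact hr j (Finset.mem_range.1 hj)
    · intro x hx hx'
      obtain ⟨j, hj, rfl⟩ := Finset.mem_image.1 hx
      obtain ⟨i, hi, hij⟩ := Finset.mem_image.1 hx'
      rw [Finset.mem_range] at hi hj
      rcases Nat.lt_trichotomy i j with h | rfl | h
      · have := hmono j i h hj; omega
      · omega
      · have := hmono i j h hi; omega
    · rw [Finset.card_image_of_injOn hinj, Finset.card_range]
    · rw [← prod_Xv, Finset.prod_image hinj]
      intro x hx
      obtain ⟨j, hj, rfl⟩ := Finset.mem_image.1 hx
      have := hr j (Finset.mem_range.1 hj)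
      omega
  · rintro ⟨s, ⟨h1, h2, h3⟩, rfl⟩
    let o := s.orderEmbOfFin h3
    have ho : ∀ i, o i ∈ s := fun i => Finset.orderEmbOfFin_mem s h3 i
    refine ⟨fun j => if h : j < a then o ⟨j, h⟩ else 0, ?_, ?_, ?_, ?_⟩
    · beta_reduce; rw [dif_pos (by omega)]; exact (h1 _ (ho _)).1
    · beta_reduce; rw [dif_pos (by omega)]; exact (h1 _ (ho _)).2
    · intro j hj
      beta_reduce
      rw [dif_pos (by omega), dif_pos hj]
      have hlt : o ⟨j, by omega⟩ < o ⟨j + 1, hj⟩ := o.strictMono (by simp)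
      have hne : o ⟨j, by omega⟩ + 1 ≠ o ⟨j + 1, hj⟩ := by
        intro h
        exact h2 _ (ho ⟨j, by omega⟩) (h ▸ ho _)
      omega
    · rw [← prod_Xv k n s (fun x hx => by have := h1 x hx; omega)]
      rw [Finset.prod_range]
      have : s = Finset.univ.map o.toEmbedding := by
        ext x
        simp only [Finset.mem_map, Finset.mem_univ, true_and]
        have := Finset.range_orderEmbOfFin s h3
        have h5 : x ∈ Set.range (s.orderEmbOfFin h3) ↔ x ∈ s := by rw [this]; simp
        exact h5.symm
      conv_lhs => rw [this]
      rw [Finset.prod_map]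
      apply Finset.prod_congr rfl
      intro i _
      simp [i.2]


lemma mem_idealI {k : Type*} [Field k] {m a p q : ℕ} (ha : 1 ≤ a) (hp : 1 ≤ p) (hq : q ≤ m)
    {f : MvPolynomial (Fin (m + 2)) k} :
    f ∈ idealI k (m + 2) a p q ↔ ∀ e, coeff e f ≠ 0 → ∃ s, Adm p q a s ∧ s ⊆ Bs m e := by
  rw [idealI_eq k (m + 2) a p q ha hp (by omega), mem_ideal_span_monomial_image]
  simp only [mem_support_iff, Set.mem_image, Set.mem_ofPred_eq, exists_exists_and_eq_and]
  refine forall_congr' fun e => imp_congr_right fun _ => exists_congr fun s => ?_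
  refine and_congr_right fun hs => ex_le_iff (fun x hx => ?_)
  have := hs.1 x hx
  omega

lemma pair_Xv (k : Type*) [Field k] (n x y : ℕ) (hx : 1 ≤ x) (hxy : x < y) (hy : y ≤ n) :
    Xv k n x * Xv k n y = monomial (ex n {x, y}) 1 := by
  rw [← prod_Xv, Finset.prod_pair (by omega)]
  intro z hz
  simp only [Finset.mem_insert, Finset.mem_singleton] at hz
  omega

lemma adm_of_card {lo hi n : ℕ} {s : Finset ℕ} (hr : ∀ x ∈ s, lo ≤ x ∧ x ≤ hi)
    (hs : ∀ x ∈ s, x + 1 ∉ s) (hn : n ≤ s.card) : ∃ v ⊆ s, Adm lo hi n v := by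
  obtain ⟨v, hv, hc⟩ := Finset.exists_subset_card_eq hn
  exact ⟨v, hv, fun x hx => hr x (hv hx), fun x hx h => hs x (hv hx) (hv h), hc⟩

lemma bad_iff {m a : ℕ} (ha : 3 ≤ a) (hm : 2 * a + 1 ≤ m) {B : Finset ℕ} (h0 : 0 ∈ B) :
    ¬ CGood (m + 1) a B ↔ (∃ s, Adm 2 (m - 1) a s ∧ s ⊆ B) ∨
      (∃ s, Adm 3 (m - 2) (a - 1) s ∧ s ∪ {1, m} ⊆ B) := by
  constructor
  · intro h
    unfold CGood at h
    push Not at h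
    obtain ⟨s, hsB, ⟨h1, h2, h3⟩, hc⟩ := h
    by_cases hz : 0 ∈ s
    · left
      have := h2 0 hz
      have h4 := h3 hz
      obtain ⟨v, hv, hA⟩ := adm_of_card (lo := 2) (hi := m - 1) (n := a) (s := s.erase 0) (by
          intro x hx
          rw [Finset.mem_erase] at hx
          have := h1 x hx.2
          have e1 : x ≠ 1 := by rintro rfl; simp_all
          have e2 : x ≠ m := by rintro rfl; simp_all
          omega) (by
          intro x hx hx'
          rw [Finset.mem_erase] at hx hx'
          exact h2 x hx.2 hx'.2) (by rw [Finset.card_erase_of_mem hz]; omega)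
      exact ⟨v, hA, hv.trans ((Finset.erase_subset _ _).trans hsB)⟩
    · by_cases hb : 1 ∈ s ∧ m ∈ s
      · right
        obtain ⟨v, hv, hA⟩ := adm_of_card (lo := 3) (hi := m - 2) (n := a - 1)
          (s := (s.erase 1).erase m) (by
          intro x hx
          rw [Finset.mem_erase, Finset.mem_erase] at hx
          have := h1 x hx.2.2
          have e1 : x ≠ 0 := by rintro rfl; simp_all
          have e2 : x ≠ 2 := by rintro rfl; exact h2 1 hb.1 hx.2.2
          have e3 : x + 1 ≠ m := by rintro rfl; exact h2 x hx.2.2 hb.2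
          omega) (by
          intro x hx hx'
          rw [Finset.mem_erase, Finset.mem_erase] at hx hx'
          exact h2 x hx.2.2 hx'.2.2) (by
          rw [Finset.card_erase_of_mem, Finset.card_erase_of_mem hb.1]
          · omega
          · rw [Finset.mem_erase]; exact ⟨by omega, hb.2⟩)
        refine ⟨v, hA, ?_⟩
        intro x hx
        rw [Finset.mem_union, Finset.mem_insert, Finset.mem_singleton] at hx
        rcases hx with h | rfl | rfl
        · exact hsB (Finset.mem_of_mem_erase (Finset.mem_of_mem_erase (hv h)))
        · exact hsB hb.1
        · exact hsB hb.2
      · left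
        have : ∃ y, (y = 1 ∨ y = m) ∧ ∀ x ∈ s.erase y, x ≠ 1 ∧ x ≠ m := by
          by_cases h1s : 1 ∈ s
          · refine ⟨1, Or.inl rfl, fun x hx => ?_⟩
            rw [Finset.mem_erase] at hx
            refine ⟨hx.1, ?_⟩
            rintro rfl; exact hb ⟨h1s, hx.2⟩
          · refine ⟨m, Or.inr rfl, fun x hx => ?_⟩
            rw [Finset.mem_erase] at hx
            refine ⟨?_, hx.1⟩
            rintro rfl; exact h1s hx.2
        obtain ⟨y, hy, hys⟩ := this
        obtain ⟨v, hv, hA⟩ := adm_of_card (lo := 2) (hi := m - 1) (n := a) (s := s.erase y) (by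
          intro x hx
          have e3 := hys x hx
          rw [Finset.mem_erase] at hx
          have := h1 x hx.2
          have e1 : x ≠ 0 := by rintro rfl; simp_all
          omega) (by
          intro x hx hx'
          rw [Finset.mem_erase] at hx hx'
          exact h2 x hx.2 hx'.2) (by have := Finset.pred_card_le_card_erase (s := s) (a := y); omega)
        exact ⟨v, hA, hv.trans ((Finset.erase_subset _ _).trans hsB)⟩
  · rintro (⟨s, ⟨h1, h2, h3⟩, hB⟩ | ⟨s, ⟨h1, h2, h3⟩, hB⟩) hG
    · have h0s : 0 ∉ s := fun h => by have := h1 0 h; omega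
      have h1s : 1 ∉ s := fun h => by have := h1 1 h; omega
      have hms : m ∉ s := fun h => by have := h1 m h; omega
      have := hG (insert 0 s) (Finset.insert_subset h0 hB) ⟨?_, ?_, ?_⟩
      · rw [Finset.card_insert_of_notMem h0s] at this; omega
      · intro x hx
        rw [Finset.mem_insert] at hx
        rcases hx with rfl | h
        · omega
        · have := h1 x h; omega
      · intro x hx hx'
        rw [Finset.mem_insert] at hx hx'
        rcases hx with rfl | h
        · rcases hx' with h' | h'
          · omega
          · exact h1s h'
        · rcases hx' with h' | h'
          · omega
          · exact h2 x h h'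
      · intro _ hx
        rw [Finset.mem_insert] at hx
        rcases hx with h | h
        · omega
        · exact hms h
    · have h1s : 1 ∉ s := fun h => by have := h1 1 h; omega
      have hms : m ∉ s := fun h => by have := h1 m h; omega
      have := hG (s ∪ {1, m}) hB ⟨?_, ?_, ?_⟩
      · rw [Finset.card_union_of_disjoint, Finset.card_pair (by omega)] at this
        · omega
        · rw [Finset.disjoint_left]
          intro x hx; have := h1 x hx
          simp only [Finset.mem_insert, Finset.mem_singleton]; omega
      · intro x hx
        simp only [Finset.mem_union, Finset.mem_insert, Finset.mem_singleton] at hx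
        rcases hx with h | h | h
        · have := h1 x h; omega
        · omega
        · omega
      · intro x hx hx'
        simp only [Finset.mem_union, Finset.mem_insert, Finset.mem_singleton] at hx hx'
        rcases hx with h | h | h <;> rcases hx' with h' | h' | h'
        · exact h2 x h h'
        · have := h1 x h; omega
        · have := h1 x h; omega
        · have := h1 _ h'; omega
        · omega
        · omega
        · have := h1 _ h'; omega
        · omega
        · omega
      · intro hx
        simp only [Finset.mem_union, Finset.mem_insert, Finset.mem_singleton] at hx
        rcases hx with h | h | h
        · have := h1 _ h; omega
        · omega
        · omega

lemma mem_I {k : Type*} [Field k] {m a : ℕ} (ha : 3 ≤ a) (hm : 2 * a + 1 ≤ m)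
    {I : Ideal (MvPolynomial (Fin (m + 2)) k)}
    (hI : I = idealI k (m + 2) a 2 (m - 1) +
      Ideal.span {Xv k (m + 2) 1 * Xv k (m + 2) m} * idealI k (m + 2) (a - 1) 3 (m - 2))
    {f : MvPolynomial (Fin (m + 2)) k} :
    f ∈ I ↔ ∀ e, CGood (m + 1) a (Bs m e) → coeff e f = 0 := by
  have : I = Ideal.span ((fun e => monomial e (1 : k)) '' (ex (m + 2) '' {s | Adm 2 (m - 1) a s} ∪
      ex (m + 2) '' ((fun s => s ∪ {1, m}) '' {s | Adm 3 (m - 2) (a - 1) s}))) := by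
    rw [hI, idealI_eq k (m + 2) a 2 (m - 1) (by omega) (by omega) (by omega),
      idealI_eq k (m + 2) (a - 1) 3 (m - 2) (by omega) (by omega) (by omega),
      pair_Xv _ _ _ _ (by omega) (by omega) (by omega), Ideal.span_mul_span', Set.image_union,
      Ideal.span_union]
    refine congrArg₂ (· ⊔ ·) rfl ?_
    congr 1
    rw [Set.singleton_mul]
    simp only [Set.image_image]
    apply Set.image_congr
    intro s hs
    rw [monomial_mul, one_mul, ex_union, add_comm (ex (m + 2) s)]
    intro x hx
    have := hs.1 x hx
    simp only [Finset.mem_insert, Finset.mem_singleton]; omega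
  rw [this, mem_ideal_span_monomial_image]
  refine forall_congr' fun e => ?_
  rw [mem_support_iff, ← not_imp_not, not_not]
  refine imp_congr_left ?_
  rw [not_iff_comm, bad_iff ha hm (zero_mem_Bs e)]
  constructor
  · rintro (⟨s, hs, hB⟩ | ⟨s, hs, hB⟩)
    · refine ⟨_, Or.inl ⟨s, hs, rfl⟩, (ex_le_iff ?_).2 hB⟩
      intro x hx; have := hs.1 x hx; omega
    · refine ⟨_, Or.inr ⟨_, ⟨s, hs, rfl⟩, rfl⟩, (ex_le_iff ?_).2 hB⟩
      intro x hx
      simp only [Finset.mem_union, Finset.mem_insert, Finset.mem_singleton] at hx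
      rcases hx with h | h
      · have := hs.1 x h; omega
      · omega
  · rintro ⟨_, ⟨s, hs, rfl⟩ | ⟨_, ⟨s, hs, rfl⟩, rfl⟩, hB⟩
    · refine Or.inl ⟨s, hs, (ex_le_iff ?_).1 hB⟩
      intro x hx; have := hs.1 x hx; omega
    · refine Or.inr ⟨s, hs, (ex_le_iff ?_).1 hB⟩
      intro x hx
      simp only [Finset.mem_union, Finset.mem_insert, Finset.mem_singleton] at hx
      rcases hx with h | h
      · have := hs.1 x h; omega
      · omega


def Nul {k : Type*} [Field k] (m a : ℕ) (f : MvPolynomial (Fin (m + 2)) k) : Prop :=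
  ∀ e, CGood (m + 1) a (Bs m e) → coeff e f = 0

lemma Bs_ex {m : ℕ} {s : Finset ℕ} (hs : ∀ x ∈ s, x ≤ m) : Bs m (ex (m + 2) s) = insert 0 s := by
  ext t
  rw [mem_Bs_ex, Finset.mem_insert]
  constructor
  · exact fun h => h.2
  · rintro (rfl | h)
    · simp
    · exact ⟨hs t h, Or.inr h⟩

lemma Bs_add_ex {m : ℕ} {s : Finset ℕ} (hs : ∀ x ∈ s, x ≤ m) (e : Fin (m + 2) →₀ ℕ) :
    Bs m (e + ex (m + 2) s) = Bs m e ∪ s := by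
  rw [Bs_add, Bs_ex hs]
  ext t
  simp only [Finset.mem_union, Finset.mem_insert]
  have := zero_mem_Bs e
  constructor
  · rintro (h | rfl | h) <;> simp_all
  · rintro (h | h) <;> simp_all

lemma Bs_add_z {m : ℕ} (e : Fin (m + 2) →₀ ℕ) : Bs m (e + ex (m + 2) {m + 1, m + 2}) = Bs m e := by
  rw [Bs_add]
  apply Finset.union_eq_left.2
  intro t ht
  rw [mem_Bs_ex] at ht
  obtain ⟨h, rfl | h1⟩ := ht
  · exact zero_mem_Bs e
  · simp only [Finset.mem_insert, Finset.mem_singleton] at h1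
    omega

lemma coeff_add_mon {k : Type*} [Field k] {m : ℕ} (f : MvPolynomial (Fin (m + 2)) k)
    (e s : Fin (m + 2) →₀ ℕ) : coeff (e + s) (monomial s 1 * f) = coeff e f := by
  rw [add_comm e s, coeff_monomial_mul, one_mul]

lemma phi_key {k : Type*} [Field k] {m a : ℕ} (ha : 3 ≤ a) (hm : 2 * a + 1 ≤ m)
    {v w : MvPolynomial (Fin (m + 2)) k} (hv : v ∈ idealI k (m + 2) (a - 1) 2 (m - 2))
    (hw : w ∈ idealI k (m + 2) (a - 2) 3 (m - 3))
    (h : Nul m a (v + monomial (ex (m + 2) {m + 1, m + 2}) 1 * w)) :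
    Nul m a (monomial (ex (m + 2) {1, m - 1, m}) 1 * w) := by
  intro E hE
  by_contra hne
  rw [coeff_monomial_mul'] at hne
  split_ifs at hne with hle
  swap
  · exact hne rfl
  obtain ⟨e, rfl⟩ := exists_add_of_le hle
  rw [add_tsub_cancel_left, one_mul] at hne
  rw [add_comm _ e, Bs_add_ex (by simp; omega)] at hE
  have h1 := h (e + ex (m + 2) {m + 1, m + 2}) (by
    rw [Bs_add_z]; exact hE.mono Finset.subset_union_left)
  rw [coeff_add, coeff_add_mon] at h1
  have h2 : coeff (e + ex (m + 2) {m + 1, m + 2}) v ≠ 0 := by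
    intro h3; rw [h3, zero_add] at h1; exact hne h1
  rw [mem_idealI (by omega) (by omega) (by omega)] at hv hw
  obtain ⟨v0, hv0, hvB⟩ := hv _ h2
  obtain ⟨w0, hw0, hwB⟩ := hw _ hne
  rw [Bs_add_z] at hvB
  obtain ⟨v1, v2, v3⟩ := hv0
  obtain ⟨w1, w2, w3⟩ := hw0
  have hmv : m ∉ v0 := fun h => by have := v1 m h; omega
  have h1w : 1 ∉ w0 := fun h => by have := w1 1 h; omega
  have hmw : m - 1 ∉ w0 := fun h => by have := w1 _ h; omega
  refine combX (N := m + 1) (a := a) (by omega) hE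
    (Finset.mem_union_left _ (zero_mem_Bs e)) (c := insert m v0) (c' := insert 1 (insert (m - 1) w0))
    ?_ ?_ ?_ ?_ ?_ ?_ ?_ ?_
  · intro x hx
    rw [Finset.mem_insert] at hx
    rcases hx with rfl | hx
    · simp
    · exact Finset.mem_union_left _ (hvB hx)
  · intro x hx
    simp only [Finset.mem_insert] at hx
    rcases hx with rfl | rfl | hx
    · simp
    · simp
    · exact Finset.mem_union_left _ (hwB hx)
  · intro x hx hx'
    simp only [Finset.mem_insert] at hx hx'
    rcases hx with h | h <;> rcases hx' with h' | h'
    · omega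
    · have := v1 _ h'; omega
    · have := v1 _ h; omega
    · exact v2 x h h'
  · intro x hx hx'
    simp only [Finset.mem_insert] at hx hx'
    rcases hx with h | h | h <;> rcases hx' with h' | h' | h' <;> try omega
    · have := w1 _ h'; omega
    · have := w1 _ h'; omega
    · have := w1 _ h; omega
    · have := w1 _ h; omega
    · exact w2 x h h'
  · intro x hx
    rw [Finset.mem_insert] at hx
    rcases hx with rfl | hx
    · omega
    · have := v1 x hx; omega
  · intro x hx
    simp only [Finset.mem_insert] at hx
    rcases hx with rfl | rfl | hx
    · omega
    · omega
    · have := w1 x hx; omega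
  · rw [Finset.card_insert_of_notMem hmv]; omega
  · rw [Finset.card_insert_of_notMem, Finset.card_insert_of_notMem hmw]
    · omega
    · rw [Finset.mem_insert]; push Not
      exact ⟨by omega, h1w⟩

lemma annann {k : Type*} [Field k] {m a : ℕ} (hm : 2 * a + 1 ≤ m) {g : Finset ℕ}
    (hg : ∀ x ∈ g, x ≤ m) (z : Fin (m + 2) →₀ ℕ)
    {f : MvPolynomial (Fin (m + 2)) k}
    (H : ∀ h : MvPolynomial (Fin (m + 2)) k, Nul m a (h * monomial (z + ex (m + 2) g) 1) → Nul m a (h * f))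
    {e : Fin (m + 2) →₀ ℕ} (he : CGood (m + 1) a (Bs m e)) (hf : coeff e f ≠ 0) : g ⊆ Bs m e := by
  intro u hu
  by_contra huB
  obtain ⟨C, hC1, hC2, hC3, hC4, hC5⟩ := sphere (N := m + 1) (a := a) (u := u) (by omega)
    (by have := hg u hu; omega) (Bs m e) huB Bs_lt he
  have hC6 : ∀ x ∈ C, x ≤ m := fun x hx => by have := hC3 x hx; omega
  have := H (monomial (ex (m + 2) C) 1) (by
    intro E hE
    rw [monomial_mul, coeff_monomial]
    split_ifs with h
    · exfalso
      apply hC5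
      apply hE.mono
      rw [← h, Bs_add, Bs_add_ex hg, Bs_ex hC6]
      intro x hx
      rw [Finset.mem_insert] at hx
      rcases hx with rfl | hx
      · simp [hu]
      · simp [hx]
    · rfl) (e + ex (m + 2) C) (by
    rw [Bs_add_ex hC6]
    exact hC4.mono (Finset.union_subset hC1 subset_rfl))
  rw [coeff_add_mon] at this
  exact hf this

lemma annY {k : Type*} [Field k] {m a : ℕ} (ha : 3 ≤ a) (hm : 2 * a + 1 ≤ m)
    {f : MvPolynomial (Fin (m + 2)) k}
    (H : ∀ v, Adm 2 (m - 2) (a - 1) v → Nul m a (monomial (ex (m + 2) v) 1 * f))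
    {e : Fin (m + 2) →₀ ℕ} (he : CGood (m + 1) a (Bs m e)) (hf : coeff e f ≠ 0) :
    {1, m - 1, m} ⊆ Bs m e := by
  intro u hu
  have hu' : u = 1 ∨ u = m - 1 ∨ u = m := by simpa using hu
  by_contra huB
  obtain ⟨C, hC1, hC2, hC3, hC4, hC5⟩ := sphere (N := m + 1) (a := a) (u := u) (by omega)
    (by omega) (Bs m e) huB Bs_lt he
  have h0 : 0 ∈ C := hC1 (zero_mem_Bs e)
  have : ∃ v, Adm 2 (m - 2) (a - 1) v ∧ v ⊆ C := by
    have hC4' := not_or.1 ((not_iff_not.2 (bad_iff ha hm h0)).1 (not_not.2 hC4))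
    rw [bad_iff ha hm (Finset.mem_insert_of_mem h0)] at hC5
    rcases hC5 with ⟨s, hs, hsB⟩ | ⟨s, hs, hsB⟩
    · have hus : u ∈ s := by
        by_contra hus
        refine hC4'.1 ⟨s, hs, fun x hx => ?_⟩
        rcases Finset.mem_insert.1 (hsB hx) with rfl | h
        · exact absurd hx hus
        · exact h
      have := hs.1 u hus
      refine ⟨s.erase u, ⟨?_, ?_, ?_⟩, ?_⟩
      · intro x hx
        rw [Finset.mem_erase] at hx
        have := hs.1 x hx.2
        omega
      · intro x hx hx'
        rw [Finset.mem_erase] at hx hx'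
        exact hs.2.1 x hx.2 hx'.2
      · rw [Finset.card_erase_of_mem hus, hs.2.2]
      · intro x hx
        rw [Finset.mem_erase] at hx
        rcases Finset.mem_insert.1 (hsB hx.2) with rfl | h
        · exact absurd rfl hx.1
        · exact h
    · refine ⟨s, ⟨fun x hx => ?_, hs.2⟩, fun x hx => ?_⟩
      · have := hs.1 x hx; omega
      · rcases Finset.mem_insert.1 (hsB (Finset.mem_union_left _ hx)) with rfl | h
        · have := hs.1 x hx; omega
        · exact h
  obtain ⟨v, hv, hvC⟩ := this
  have := H v hv (e + ex (m + 2) v) (by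
    rw [Bs_add_ex (fun x hx => by have := hv.1 x hx; omega)]
    exact hC4.mono (Finset.union_subset hC1 hvC))
  rw [coeff_add_mon] at this
  exact hf this

lemma glue {k : Type*} [Field k] {m a lo hi n : ℕ} (hlo : 2 ≤ lo) (hhi : hi + 2 ≤ m + 1)
    (y : Finset ℕ) (hy : ∀ x ∈ y, 1 ≤ x ∧ x ≤ m) (hyd : ∀ x ∈ y, ¬ (lo ≤ x ∧ x ≤ hi))
    (hE : ∀ b, 0 ∈ b → y ⊆ b → Extra (m + 1) a lo hi n b)
    (F : Finset ℕ → MvPolynomial (Fin (m + 2)) k)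
    (h1 : ∀ g, Adm lo hi n g → ∀ e, CGood (m + 1) a (Bs m e) → coeff e (F g) ≠ 0 → y ∪ g ⊆ Bs m e)
    (h2 : ∀ g g', Adm lo hi n g → Adm lo hi n g' →
      Nul m a (monomial (ex (m + 2) g') 1 * F g - monomial (ex (m + 2) g) 1 * F g')) :
    ∃ β : MvPolynomial (Fin (m + 2)) k, ∀ g, Adm lo hi n g →
      Nul m a (F g - β * monomial (ex (m + 2) y + ex (m + 2) g) 1) := by
  classical
  have hle : ∀ g, Adm lo hi n g → ∀ x ∈ g, 1 ≤ x ∧ x ≤ m := fun g hg x hx => by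
    have := hg.1 x hx; omega
  have hle' : ∀ g, Adm lo hi n g → ∀ x ∈ g, x ≤ m := fun g hg x hx => (hle g hg x hx).2
  have hy' : ∀ x ∈ y, x ≤ m := fun x hx => (hy x hx).2
  let P : (Fin (m + 2) →₀ ℕ) → Prop := fun e => ∃ g, Adm lo hi n g ∧ CGood (m + 1) a (Bs m e ∪ y ∪ g)
  let c : (Fin (m + 2) →₀ ℕ) → k := fun e =>
    if h : P e then coeff (e + ex (m + 2) y + ex (m + 2) h.choose) (F h.choose) else 0
  let S : Finset (Fin (m + 2) →₀ ℕ) := (Finset.range (m + 1)).powerset.biUnion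
    (fun g => (F g).support.image (fun e => e - (ex (m + 2) y + ex (m + 2) g)))
  have hS : ∀ e, c e ≠ 0 → e ∈ S := by
    intro e he
    by_cases h : P e
    · simp only [c, dif_pos h] at he
      refine Finset.mem_biUnion.2 ⟨h.choose, ?_, Finset.mem_image.2 ⟨_, mem_support_iff.2 he, ?_⟩⟩
      · rw [Finset.mem_powerset]
        intro x hx
        have := hle' _ h.choose_spec.1 x hx
        rw [Finset.mem_range]; omega
      · rw [add_assoc, add_tsub_cancel_right]
    · simp only [c, dif_neg h] at he
      exact absurd rfl he
  let β : MvPolynomial (Fin (m + 2)) k := ∑ e ∈ S, monomial e (c e)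
  have hβ : ∀ e, coeff e β = c e := by
    intro e
    simp only [β, coeff_sum, coeff_monomial]
    rw [Finset.sum_ite_eq']
    split_ifs with h
    · rfl
    · by_contra hne
      exact h (hS e (Ne.symm hne))
  have key : ∀ e g, Adm lo hi n g → CGood (m + 1) a (Bs m e ∪ y ∪ g) →
      coeff e β = coeff (e + ex (m + 2) y + ex (m + 2) g) (F g) := by
    intro e g hg hG
    have hP : P e := ⟨g, hg, hG⟩
    rw [hβ]
    simp only [c, dif_pos hP]
    refine connected (N := m + 1) (a := a) hlo hhi
      (hE (Bs m e ∪ y) (Finset.mem_union_left _ (zero_mem_Bs e)) Finset.subset_union_right)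
      (fun g => coeff (e + ex (m + 2) y + ex (m + 2) g) (F g)) ?_ _ _ hP.choose_spec.1 hg
      hP.choose_spec.2 hG
    intro v u hv hu hvu
    have := h2 v u hv hu (e + ex (m + 2) y + ex (m + 2) v + ex (m + 2) u) (by
      rw [Bs_add_ex (hle' u hu), Bs_add_ex (hle' v hv), Bs_add_ex hy']
      exact hvu)
    rw [coeff_sub, coeff_add_mon, add_right_comm _ (ex (m + 2) v), coeff_add_mon, sub_eq_zero] at this
    exact this
  refine ⟨β, fun g hg E hE' => ?_⟩
  rw [coeff_sub, mul_comm]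
  by_cases hl : ex (m + 2) y + ex (m + 2) g ≤ E
  · obtain ⟨e, rfl⟩ := exists_add_of_le hl
    rw [add_comm _ e] at hE' ⊢
    rw [coeff_add_mon, key e g hg, add_assoc, sub_self]
    rwa [← add_assoc, Bs_add_ex (hle' g hg), Bs_add_ex hy'] at hE'
  · rw [coeff_monomial_mul', if_neg hl, sub_zero]
    by_contra hne
    have := h1 g hg E hE' hne
    apply hl
    rw [← ex_union, ex_le_iff]
    · exact this
    · intro x hx
      rcases Finset.mem_union.1 hx with h | h
      · exact hy x h
      · exact hle g hg x h
    · intro x hx hx'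
      exact hyd x hx (hg.1 x hx')

lemma extraV {m a : ℕ} (ha : 3 ≤ a) (hm : 2 * a + 1 ≤ m) (b : Finset ℕ) (h0 : 0 ∈ b) :
    Extra (m + 1) a 2 (m - 2) (a - 1) b := by
  intro s hs hsb
  by_cases h : m ∈ s
  · refine ⟨∅, {m}, by simp, ?_, by simp; omega, by simp, by simp; omega, by simp, by simp, by simp, ?_⟩
    · intro x hx
      rw [Finset.mem_singleton] at hx
      subst hx
      have := hsb h
      simpa using this
    · intro h0 _
      exact hs.2.2 h0 (by simpa using h)
  · exact ⟨{0}, ∅, by simpa using h0, by simp, by simp; omega, by simp, by simp, by simp, by simp,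
      by simpa using h, by simp⟩

lemma extraW {m a : ℕ} (ha : 3 ≤ a) (hm : 2 * a + 1 ≤ m) (b : Finset ℕ) (h0 : 0 ∈ b)
    (hb : {1, m - 1, m} ⊆ b) :
    Extra (m + 1) a 3 (m - 3) (a - 2) b := by
  intro s hs hsb
  have h1 : 1 ∈ b := hb (by simp)
  have h2 : m - 1 ∈ b := hb (by simp)
  by_cases h : m ∈ s
  · exact ⟨{1}, {m - 1}, by simpa using h1, by simpa using h2, by simp; omega, by simp,
      by simp; omega, by simp, by simp, by simp, by simp; omega⟩
  · exact ⟨{0}, {m - 1}, by simpa using h0, by simpa using h2, by simp; omega, by simp,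
      by simp; omega, by simp, by simp, by simpa using h, by simp; omega⟩


lemma psi_rel {R : Type*} [CommRing R] {I : Ideal R} {K : Ideal (R ⧸ I)} (ψ : K →ₗ[R ⧸ I] R ⧸ I)
    {r r' f f' h h' : R} (hr : Ideal.Quotient.mk I r ∈ K) (hr' : Ideal.Quotient.mk I r' ∈ K)
    (hf : Ideal.Quotient.mk I f = ψ ⟨_, hr⟩) (hf' : Ideal.Quotient.mk I f' = ψ ⟨_, hr'⟩)
    (H : h * r - h' * r' ∈ I) : h * f - h' * f' ∈ I := by
  rw [← Ideal.Quotient.eq_zero_iff_mem] at H ⊢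
  rw [map_sub, map_mul, map_mul] at H ⊢
  rw [hf, hf', ← smul_eq_mul, ← smul_eq_mul, ← map_smul, ← map_smul, ← map_sub]
  convert map_zero ψ
  ext
  simpa using H

lemma psi_agree {R : Type*} [CommRing R] {I : Ideal R} {K : Ideal (R ⧸ I)} (ψ : K →ₗ[R ⧸ I] R ⧸ I)
    (S : Set R) (T A : R) (hT : ∀ v ∈ Ideal.span S, Ideal.Quotient.mk I (T * v) ∈ K)
    (hS : ∀ s ∈ S, ∀ h, ψ ⟨Ideal.Quotient.mk I (T * s), h⟩ = Ideal.Quotient.mk I (A * s)) :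
    ∀ v ∈ Ideal.span S, ∀ h, ψ ⟨Ideal.Quotient.mk I (T * v), h⟩ = Ideal.Quotient.mk I (A * v) := by
  intro v hv
  induction hv using Submodule.span_induction with
  | mem x hx => exact hS x hx
  | zero =>
    intro h
    rw [mul_zero A, map_zero (Ideal.Quotient.mk I)]
    refine (congrArg ψ ?_).trans (map_zero ψ)
    ext; simp
  | add x y hx hy ihx ihy =>
    intro h
    rw [mul_add A, map_add (Ideal.Quotient.mk I), ← ihx (hT x hx), ← ihy (hT y hy), ← map_add ψ]
    refine congrArg ψ ?_
    ext; simp [mul_add]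
  | smul c x hx ih =>
    intro h
    have e1 : Ideal.Quotient.mk I (A * c • x) =
        Ideal.Quotient.mk I c • Ideal.Quotient.mk I (A * x) := by
      rw [smul_eq_mul, smul_eq_mul, mul_left_comm, map_mul]
    rw [e1, ← ih (hT x hx), ← map_smul ψ]
    refine congrArg ψ ?_
    ext; simp [mul_left_comm]

lemma jbar_mem {R : Type*} [CommRing R] {I V W : Ideal R} {Z : R} {u : R ⧸ I} :
    u ∈ (V + Ideal.span {Z} * W).map (Ideal.Quotient.mk I) ↔
    ∃ v ∈ V, ∃ w ∈ W, u = Ideal.Quotient.mk I (v + Z * w) := by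
  rw [Ideal.mem_map_iff_of_surjective _ Ideal.Quotient.mk_surjective]
  constructor
  · rintro ⟨x, hx, rfl⟩
    obtain ⟨v, hv, y, hy, rfl⟩ := Submodule.mem_sup.1 hx
    obtain ⟨w, hw, rfl⟩ := Ideal.mem_span_singleton_mul.1 hy
    exact ⟨v, hv, w, hw, rfl⟩
  · rintro ⟨v, hv, w, hw, rfl⟩
    exact ⟨_, Submodule.mem_sup.2 ⟨v, hv, _, Ideal.mem_span_singleton_mul.2 ⟨w, hw, rfl⟩, rfl⟩, rfl⟩

lemma phi_exists {R : Type*} [CommRing R] {I V W : Ideal R} {Z Y : R} {K : Ideal (R ⧸ I)}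
    (hK : K = (V + Ideal.span {Z} * W).map (Ideal.Quotient.mk I))
    (key : ∀ v ∈ V, ∀ w ∈ W, v + Z * w ∈ I → Y * w ∈ I) :
    ∃ φ : K →ₗ[R ⧸ I] R ⧸ I, ∀ u : K, ∀ v ∈ V, ∀ w ∈ W,
      (u : R ⧸ I) = Ideal.Quotient.mk I (v + Z * w) → φ u = Ideal.Quotient.mk I (Y * w) := by
  have hd : ∀ u : K, ∃ v ∈ V, ∃ w ∈ W, (u : R ⧸ I) = Ideal.Quotient.mk I (v + Z * w) := by
    intro u
    exact jbar_mem.1 (hK.le u.2)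
  choose v hv w hw huv using hd
  have wd : ∀ u : K, ∀ v' ∈ V, ∀ w' ∈ W, (u : R ⧸ I) = Ideal.Quotient.mk I (v' + Z * w') →
      Ideal.Quotient.mk I (Y * w u) = Ideal.Quotient.mk I (Y * w') := by
    intro u v' hv' w' hw' h
    rw [huv u, Ideal.Quotient.eq] at h
    rw [Ideal.Quotient.eq, ← mul_sub]
    refine key (v u - v') (V.sub_mem (hv u) hv') _ (W.sub_mem (hw u) hw') ?_
    convert h using 1
    ring
  refine ⟨{ toFun := fun u => Ideal.Quotient.mk I (Y * w u), map_add' := ?_, map_smul' := ?_ }, wd⟩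
  · intro x y
    rw [← map_add, ← mul_add]
    refine wd _ (v x + v y) (V.add_mem (hv x) (hv y)) _ (W.add_mem (hw x) (hw y)) ?_
    rw [Submodule.coe_add, huv x, huv y, ← map_add]
    congr 1; ring
  · intro c x
    obtain ⟨c, rfl⟩ := Ideal.Quotient.mk_surjective c
    rw [RingHom.id_apply, smul_eq_mul, ← map_mul, mul_left_comm]
    refine wd _ (c * v x) (V.mul_mem_left _ (hv x)) _ (W.mul_mem_left _ (hw x)) ?_
    rw [Submodule.coe_smul, huv x, smul_eq_mul, ← map_mul]
    congr 1; ring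

lemma lift_exists {R : Type*} [CommRing R] {I : Ideal R} {K : Ideal (R ⧸ I)} (ψ : K →ₗ[R ⧸ I] R ⧸ I)
    {ι : Type*} (r : ι → R) : ∃ F : ι → R, ∀ i, ∀ h : Ideal.Quotient.mk I (r i) ∈ K,
      Ideal.Quotient.mk I (F i) = ψ ⟨_, h⟩ := by
  have : ∀ i, ∃ f : R, ∀ h : Ideal.Quotient.mk I (r i) ∈ K, Ideal.Quotient.mk I f = ψ ⟨_, h⟩ := by
    intro i
    by_cases h : Ideal.Quotient.mk I (r i) ∈ K
    · obtain ⟨f, hf⟩ := Ideal.Quotient.mk_surjective (ψ ⟨_, h⟩)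
      exact ⟨f, fun _ => hf⟩
    · exact ⟨0, fun h' => absurd h' h⟩
  choose F hF using this
  exact ⟨F, hF⟩

lemma triple_Xv (k : Type*) [Field k] (m : ℕ) (hm : 4 ≤ m) :
    Xv k (m + 2) 1 * Xv k (m + 2) (m - 1) * Xv k (m + 2) m = monomial (ex (m + 2) {1, m - 1, m}) 1 := by
  rw [← prod_Xv, Finset.prod_insert (by simp; omega), Finset.prod_pair (by omega), mul_assoc]
  intro z hz
  simp only [Finset.mem_insert, Finset.mem_singleton] at hz
  omega

lemma genV {k : Type*} [Field k] {m a : ℕ} (ha : 3 ≤ a) (hm : 2 * a + 1 ≤ m)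
    {I : Ideal (MvPolynomial (Fin (m + 2)) k)}
    (hI : ∀ f, f ∈ I ↔ Nul m a f) {K : Ideal (MvPolynomial (Fin (m + 2)) k ⧸ I)}
    (hK : ∀ v ∈ idealI k (m + 2) (a - 1) 2 (m - 2), Ideal.Quotient.mk I v ∈ K)
    (ψ : K →ₗ[MvPolynomial (Fin (m + 2)) k ⧸ I] MvPolynomial (Fin (m + 2)) k ⧸ I) :
    ∃ α : MvPolynomial (Fin (m + 2)) k, ∀ v ∈ idealI k (m + 2) (a - 1) 2 (m - 2), ∀ h,
      ψ ⟨Ideal.Quotient.mk I v, h⟩ = Ideal.Quotient.mk I (α * v) := by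
  have hV := idealI_eq k (m + 2) (a - 1) 2 (m - 2) (by omega) (by omega) (by omega)
  have hgen : ∀ v, Adm 2 (m - 2) (a - 1) v →
      Ideal.Quotient.mk I (monomial (ex (m + 2) v) 1) ∈ K := by
    intro v hv
    apply hK
    rw [hV]
    exact Ideal.subset_span ⟨_, ⟨v, hv, rfl⟩, rfl⟩
  obtain ⟨F, hF⟩ := lift_exists ψ (fun v : Finset ℕ => (monomial (ex (m + 2) v) (1 : k)))
  obtain ⟨α, hα⟩ := glue (k := k) (m := m) (a := a) (lo := 2) (hi := m - 2) (n := a - 1) (by omega)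
    (by omega) ∅ (by simp) (by simp) (fun b h0 _ => extraV ha hm b h0) F (by
      intro g hg e he hne
      rw [Finset.empty_union]
      refine annann hm (fun x hx => by have := hg.1 x hx; omega) 0 (f := F g) ?_ he hne
      intro h hh
      rw [zero_add, ← hI] at hh
      rw [← hI]
      have := psi_rel ψ (hgen g hg) (hgen g hg) (hF g _) (hF g _) (h := h) (h' := 0) (by
        rwa [zero_mul, sub_zero])
      rwa [zero_mul, sub_zero] at this) (by
      intro g g' hg hg'
      rw [← hI]
      refine psi_rel ψ (hgen g hg) (hgen g' hg') (hF g _) (hF g' _) ?_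
      rw [mul_comm, sub_self]
      exact I.zero_mem)
  refine ⟨α, ?_⟩
  rw [hV]
  have := psi_agree ψ ((fun e => monomial e (1 : k)) '' (ex (m + 2) '' {s | Adm 2 (m - 2) (a - 1) s}))
    1 α (by rw [← hV]; simpa using hK) (by
      rintro _ ⟨_, ⟨v, hv, rfl⟩, rfl⟩ h
      have h1 := hα v hv
      rw [← hI, ← Ideal.Quotient.eq, ex_empty, zero_add, hF v (hgen v hv)] at h1
      rw [← h1]
      simp only [one_mul])
  simpa only [one_mul] using this

lemma genW {k : Type*} [Field k] {m a : ℕ} (ha : 3 ≤ a) (hm : 2 * a + 1 ≤ m)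
    {I : Ideal (MvPolynomial (Fin (m + 2)) k)}
    (hI : ∀ f, f ∈ I ↔ Nul m a f) {K : Ideal (MvPolynomial (Fin (m + 2)) k ⧸ I)}
    (hK : ∀ v ∈ idealI k (m + 2) (a - 1) 2 (m - 2), Ideal.Quotient.mk I v ∈ K)
    (hK' : ∀ w ∈ idealI k (m + 2) (a - 2) 3 (m - 3),
      Ideal.Quotient.mk I (monomial (ex (m + 2) {m + 1, m + 2}) 1 * w) ∈ K)
    (ψ : K →ₗ[MvPolynomial (Fin (m + 2)) k ⧸ I] MvPolynomial (Fin (m + 2)) k ⧸ I)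
    (hψ : ∀ v ∈ idealI k (m + 2) (a - 1) 2 (m - 2), ∀ h, ψ ⟨Ideal.Quotient.mk I v, h⟩ = 0) :
    ∃ β : MvPolynomial (Fin (m + 2)) k, ∀ w ∈ idealI k (m + 2) (a - 2) 3 (m - 3), ∀ h,
      ψ ⟨Ideal.Quotient.mk I (monomial (ex (m + 2) {m + 1, m + 2}) 1 * w), h⟩ =
        Ideal.Quotient.mk I (β * monomial (ex (m + 2) {1, m - 1, m}) 1 * w) := by
  have hV := idealI_eq k (m + 2) (a - 1) 2 (m - 2) (by omega) (by omega) (by omega)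
  have hW := idealI_eq k (m + 2) (a - 2) 3 (m - 3) (by omega) (by omega) (by omega)
  have hgenV : ∀ v, Adm 2 (m - 2) (a - 1) v →
      monomial (ex (m + 2) v) 1 ∈ idealI k (m + 2) (a - 1) 2 (m - 2) := by
    intro v hv
    rw [hV]
    exact Ideal.subset_span ⟨_, ⟨v, hv, rfl⟩, rfl⟩
  have hgen : ∀ w, Adm 3 (m - 3) (a - 2) w →
      Ideal.Quotient.mk I (monomial (ex (m + 2) {m + 1, m + 2}) 1 * monomial (ex (m + 2) w) 1) ∈ K := by
    intro v hv
    apply hK'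
    rw [hW]
    exact Ideal.subset_span ⟨_, ⟨v, hv, rfl⟩, rfl⟩
  obtain ⟨F, hF⟩ := lift_exists ψ (fun v : Finset ℕ =>
    (monomial (ex (m + 2) {m + 1, m + 2}) (1 : k)) * (monomial (ex (m + 2) v) (1 : k)))
  obtain ⟨β, hβ⟩ := glue (k := k) (m := m) (a := a) (lo := 3) (hi := m - 3) (n := a - 2) (by omega)
    (by omega) {1, m - 1, m} (by simp; omega) (by simp; omega)
    (fun b h0 hb => extraW ha hm b h0 hb) F (by
      intro g hg e he hne
      apply Finset.union_subset
      · refine annY ha hm (f := F g) ?_ he hne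
        intro v hv
        rw [← hI]
        have := psi_rel ψ (hgen g hg) (hK _ (hgenV v hv)) (hF g _)
          (f' := 0) (by rw [hψ _ (hgenV v hv), map_zero])
          (h := monomial (ex (m + 2) v) 1)
          (h' := monomial (ex (m + 2) {m + 1, m + 2}) 1 * monomial (ex (m + 2) g) 1) (by
          rw [mul_comm, sub_self]
          exact I.zero_mem)
        rwa [mul_zero, sub_zero] at this
      refine annann hm (fun x hx => by have := hg.1 x hx; omega) (ex (m + 2) {m + 1, m + 2})
        (f := F g) ?_ he hne
      intro h hh
      rw [← hI] at hh
      rw [← hI]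
      have := psi_rel ψ (hgen g hg) (hgen g hg) (hF g _) (hF g _) (h := h) (h' := 0) (by
        rwa [zero_mul, sub_zero, monomial_mul, one_mul])
      rwa [zero_mul, sub_zero] at this) (by
      intro g g' hg hg'
      rw [← hI]
      refine psi_rel ψ (hgen g hg) (hgen g' hg') (hF g _) (hF g' _) ?_
      rw [mul_left_comm, mul_comm (monomial (ex (m + 2) g') 1), mul_left_comm (monomial (ex (m + 2) g) 1), sub_self]
      exact I.zero_mem)
  refine ⟨β, ?_⟩
  rw [hW]
  refine psi_agree ψ _ _ _ (by rw [← hW]; exact hK') ?_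
  rintro _ ⟨_, ⟨v, hv, rfl⟩, rfl⟩ h
  have h1 := hβ v hv
  rw [← hI, ← Ideal.Quotient.eq, hF v (hgen v hv)] at h1
  rw [h1, mul_assoc, monomial_mul, one_mul]


end Alg

/-- Lemma identifying the Hom module (d odd case). Let `d ≥ 5` be odd, `d + 1 < m`,
`a = (d+1)/2`. In `R = k[x_1,…,x_m,z_1,z_2]` (with `z_1, z_2` the last two variables) set
`I = I_{a,2,m−1} + x_1x_m·I_{a−1,3,m−2}` and `J = I_{a−1,2,m−2} + z_1z_2·I_{a−2,3,m−3}`, and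
let `J̄` be the image of `J` in `R/I`. Then there is a unique `R/I`-linear map
`φ : J̄ → R/I` with `φ(v) = 0` for `v ∈ I_{a−1,2,m−2}` and `φ(z_1z_2w) = x_1x_{m−1}x_m w`
for `w ∈ I_{a−2,3,m−3}`; moreover `Hom_{R/I}(J̄, R/I)` is generated as an `R/I`-module by
the inclusion `ι` and `φ`. -/
theorem hom_module_identification_odd (k : Type*) [Field k] (d m : ℕ)
    (hd : Odd d) (hd5 : 5 ≤ d) (hm : d + 1 < m) (a : ℕ) (ha : a = (d + 1) / 2)
    (I J : Ideal (MvPolynomial (Fin (m + 2)) k))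
    (hI : I = idealI k (m + 2) a 2 (m - 1) +
      Ideal.span {Xv k (m + 2) 1 * Xv k (m + 2) m} * idealI k (m + 2) (a - 1) 3 (m - 2))
    (hJ : J = idealI k (m + 2) (a - 1) 2 (m - 2) +
      Ideal.span {Xv k (m + 2) (m + 1) * Xv k (m + 2) (m + 2)} *
        idealI k (m + 2) (a - 2) 3 (m - 3))
    (Jbar : Ideal (MvPolynomial (Fin (m + 2)) k ⧸ I))
    (hJbar : Jbar = J.map (Ideal.Quotient.mk I)) :
    ∃ φ : Jbar →ₗ[MvPolynomial (Fin (m + 2)) k ⧸ I] MvPolynomial (Fin (m + 2)) k ⧸ I,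
      ((∀ u : Jbar, ∀ v ∈ idealI k (m + 2) (a - 1) 2 (m - 2),
          (u : MvPolynomial (Fin (m + 2)) k ⧸ I) = Ideal.Quotient.mk I v → φ u = 0) ∧
        (∀ u : Jbar, ∀ w ∈ idealI k (m + 2) (a - 2) 3 (m - 3),
          (u : MvPolynomial (Fin (m + 2)) k ⧸ I) =
            Ideal.Quotient.mk I (Xv k (m + 2) (m + 1) * Xv k (m + 2) (m + 2) * w) →
          φ u = Ideal.Quotient.mk I
            (Xv k (m + 2) 1 * Xv k (m + 2) (m - 1) * Xv k (m + 2) m * w))) ∧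
      (∀ ψ : Jbar →ₗ[MvPolynomial (Fin (m + 2)) k ⧸ I] MvPolynomial (Fin (m + 2)) k ⧸ I,
        ((∀ u : Jbar, ∀ v ∈ idealI k (m + 2) (a - 1) 2 (m - 2),
          (u : MvPolynomial (Fin (m + 2)) k ⧸ I) = Ideal.Quotient.mk I v → ψ u = 0) ∧
        (∀ u : Jbar, ∀ w ∈ idealI k (m + 2) (a - 2) 3 (m - 3),
          (u : MvPolynomial (Fin (m + 2)) k ⧸ I) =
            Ideal.Quotient.mk I (Xv k (m + 2) (m + 1) * Xv k (m + 2) (m + 2) * w) →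
          ψ u = Ideal.Quotient.mk I
            (Xv k (m + 2) 1 * Xv k (m + 2) (m - 1) * Xv k (m + 2) m * w))) → ψ = φ) ∧
      Submodule.span (MvPolynomial (Fin (m + 2)) k ⧸ I)
        {Submodule.subtype Jbar, φ} = ⊤ := by
  have ha3 : 3 ≤ a := by omega
  have hma : 2 * a + 1 ≤ m := by obtain ⟨c, hc⟩ := hd; omega
  have hIm : ∀ f, f ∈ I ↔ Nul m a f := fun f => mem_I ha3 hma hI
  have hZ := pair_Xv k (m + 2) (m + 1) (m + 2) (by omega) (by omega) (by omega)
  have hY := triple_Xv k m (by omega)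
  rw [hZ] at hJ
  rw [hZ, hY]
  subst hJ
  generalize hZZ : (MvPolynomial.monomial (ex (m + 2) {m + 1, m + 2}) (1 : k)) = Z at *
  generalize hYY : (MvPolynomial.monomial (ex (m + 2) {1, m - 1, m}) (1 : k)) = Y at *
  have hmemV : ∀ v ∈ idealI k (m + 2) (a - 1) 2 (m - 2), Ideal.Quotient.mk I v ∈ Jbar := by
    intro v hv
    rw [hJbar]
    exact jbar_mem.2 ⟨v, hv, 0, Ideal.zero_mem _, by rw [mul_zero, add_zero]⟩
  have hmemW : ∀ w ∈ idealI k (m + 2) (a - 2) 3 (m - 3), Ideal.Quotient.mk I (Z * w) ∈ Jbar := by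
    intro w hw
    rw [hJbar]
    exact jbar_mem.2 ⟨0, Ideal.zero_mem _, w, hw, by rw [zero_add]⟩
  have hdec : ∀ u : Jbar, ∃ v ∈ idealI k (m + 2) (a - 1) 2 (m - 2),
      ∃ w ∈ idealI k (m + 2) (a - 2) 3 (m - 3), ∃ hv hw,
      u = ⟨Ideal.Quotient.mk I v, hv⟩ + ⟨Ideal.Quotient.mk I (Z * w), hw⟩ := by
    intro u
    obtain ⟨v, hv, w, hw, h⟩ := jbar_mem.1 (hJbar.le u.2)
    refine ⟨v, hv, w, hw, hmemV v hv, hmemW w hw, ?_⟩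
    ext
    rw [h, map_add]
    rfl
  obtain ⟨φ, hφ⟩ := phi_exists (Y := Y) hJbar (by
    intro v hv w hw h
    rw [hIm] at h ⊢
    subst hZZ hYY
    exact phi_key ha3 hma hv hw h)
  have hφV : ∀ u : Jbar, ∀ v ∈ idealI k (m + 2) (a - 1) 2 (m - 2),
      (u : MvPolynomial (Fin (m + 2)) k ⧸ I) = Ideal.Quotient.mk I v → φ u = 0 := by
    intro u v hv h
    rw [hφ u v hv 0 (Ideal.zero_mem _) (by rw [mul_zero, add_zero]; exact h), mul_zero, map_zero]
  have hφW : ∀ u : Jbar, ∀ w ∈ idealI k (m + 2) (a - 2) 3 (m - 3),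
      (u : MvPolynomial (Fin (m + 2)) k ⧸ I) = Ideal.Quotient.mk I (Z * w) →
        φ u = Ideal.Quotient.mk I (Y * w) := by
    intro u w hw h
    exact hφ u 0 (Ideal.zero_mem _) w hw (by rw [zero_add]; exact h)
  refine ⟨φ, ⟨hφV, hφW⟩, ?_, ?_⟩
  · rintro ψ ⟨h1, h2⟩
    ext u
    obtain ⟨v, hv, w, hw, hv', hw', rfl⟩ := hdec u
    rw [map_add, map_add, h1 _ v hv rfl, h2 _ w hw rfl, hφV _ v hv rfl, hφW _ w hw rfl]
  · rw [eq_top_iff]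
    intro ψ _
    obtain ⟨α, hα⟩ := genV ha3 hma hIm hmemV ψ
    obtain ⟨β, hβ⟩ := genW ha3 hma hIm hmemV (by subst hZZ; exact hmemW)
      (ψ - Ideal.Quotient.mk I α • Submodule.subtype Jbar) (by
        intro v hv h
        rw [LinearMap.sub_apply, hα v hv h, LinearMap.smul_apply, Submodule.subtype_apply,
          smul_eq_mul, map_mul, sub_self])
    rw [Submodule.mem_span_pair]
    refine ⟨Ideal.Quotient.mk I α, Ideal.Quotient.mk I β, ?_⟩
    rw [hZZ, hYY] at hβ
    ext u
    obtain ⟨v, hv, w, hw, hv', hw', rfl⟩ := hdec u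
    have h1 := hβ w hw hw'
    rw [LinearMap.sub_apply, sub_eq_iff_eq_add] at h1
    rw [map_add ψ, hα v hv hv', h1, LinearMap.add_apply, LinearMap.smul_apply, LinearMap.smul_apply,
      LinearMap.smul_apply, map_add φ, hφV _ v hv rfl, hφW _ w hw rfl, map_add (Submodule.subtype Jbar)]
    simp only [Submodule.subtype_apply, smul_eq_mul, map_mul]
    ring
end

section
/- Let k be a field, d an odd integer with d ≥ 5, and m an integer with d+1 < m; set a = (d+1)/2. In k[x_1,…,x_m,z_1,z_2,T] let Q = I_{a,2,m−1} + x_1x_m·I_{a−1,3,m−2} + T·I_{a−1,2,m−2} + (z_1z_2T − x_1x_{m−1}x_m)·I_{a−2,3,m−3}, and set S = k[x_1,…,x_m,z_1,z_2,T]/Q. Then the images of z_1, z_2 form a regular sequence on S, and S/(z_1,z_2) is isomorphic as a k-algebra to k[x_1,…,x_{m+1}]/(I_{a,2,m} + x_1x_{m+1}·I_{a−1,3,m−1}), which is the Stanley–Reisner ring k[Δ(d,m+1)] of the boundary complex of the d-dimensional cyclic polytope with m+1 vertices. -/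
set_option synthInstance.maxHeartbeats 1000000
set_option maxHeartbeats 1000000

namespace UP
open MvPolynomial

variable {k : Type*} [Field k]

noncomputable def sig (k : Type*) [Field k] (n s : ℕ) :
    MvPolynomial (Fin n) k →ₐ[k] MvPolynomial (Fin n) k :=
  aeval (fun j : Fin n => if j.val + 1 = s then 0 else X j)

lemma Xv_pos {n t : ℕ} (h : 1 ≤ t ∧ t ≤ n) : Xv k n t = X ⟨t - 1, by omega⟩ := by
  simp [Xv, h]

lemma Xv_ne {n t : ℕ} (h : 1 ≤ t ∧ t ≤ n) : Xv k n t ≠ 0 := by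
  rw [Xv_pos h]; exact X_ne_zero _

lemma sig_self (n s : ℕ) : sig k n s (Xv k n s) = 0 := by
  unfold Xv
  split_ifs with h
  · have : s - 1 + 1 = s := by omega
    simp [sig, this]
  · simp

lemma sig_ne {n s t : ℕ} (hst : t ≠ s) : sig k n s (Xv k n t) = Xv k n t := by
  unfold Xv
  split_ifs with h
  · have : ¬ (t - 1 + 1 = s) := by omega
    simp [sig, this]
  · simp

lemma X_eq {n : ℕ} (i : Fin n) : (X i : MvPolynomial (Fin n) k) = Xv k n (i.val + 1) := by
  rw [Xv_pos ⟨by omega, by omega⟩]; simp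

lemma decomp (n s : ℕ) (r : MvPolynomial (Fin n) k) :
    ∃ r', r = sig k n s r + Xv k n s * r' := by
  induction r using MvPolynomial.induction_on with
  | C c => exact ⟨0, by simp [sig]⟩
  | add p q hp hq =>
    obtain ⟨p', hp⟩ := hp
    obtain ⟨q', hq⟩ := hq
    refine ⟨p' + q', ?_⟩
    rw [map_add]
    linear_combination hp + hq
  | mul_X p i hp =>
    obtain ⟨p', hp⟩ := hp
    rw [X_eq, map_mul]
    by_cases h : i.val + 1 = s
    · rw [h, sig_self]
      exact ⟨p, by ring⟩
    · rw [sig_ne h]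
      exact ⟨p' * Xv k n (i.val + 1), by linear_combination (Xv k n (i.val + 1)) * hp⟩

def Free {n : ℕ} (s : ℕ) (I : Ideal (MvPolynomial (Fin n) k)) : Prop :=
  ∀ f ∈ I, sig k n s f ∈ I ∧ ∃ f' ∈ I, f = sig k n s f + Xv k n s * f'

lemma Free.span {n s : ℕ} {G : Set (MvPolynomial (Fin n) k)}
    (hG : ∀ g ∈ G, sig k n s g = g) : Free s (Ideal.span G) := by
  intro f hf
  induction hf using Submodule.span_induction with
  | mem g hg =>
    rw [hG g hg]
    exact ⟨Ideal.subset_span hg, 0, zero_mem _, by simp⟩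
  | zero => exact ⟨by simp, 0, zero_mem _, by simp⟩
  | add p q _ _ hp hq =>
    obtain ⟨h1, p', hp', hp⟩ := hp
    obtain ⟨h2, q', hq', hq⟩ := hq
    rw [map_add]
    exact ⟨add_mem h1 h2, p' + q', add_mem hp' hq', by linear_combination hp + hq⟩
  | smul r p hpI hp =>
    obtain ⟨h1, p', hp', hp⟩ := hp
    obtain ⟨r', hr⟩ := decomp n s r
    rw [smul_eq_mul, map_mul]
    refine ⟨Ideal.mul_mem_left _ _ h1, r' * p + sig k n s r * p',
      add_mem (Ideal.mul_mem_left _ _ hpI) (Ideal.mul_mem_left _ _ hp'), ?_⟩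
    linear_combination p * hr + sig k n s r * hp

lemma Free.sup {n s : ℕ} {I J : Ideal (MvPolynomial (Fin n) k)}
    (hI : Free s I) (hJ : Free s J) : Free s (I + J) := by
  intro f hf
  obtain ⟨p, hpI, q, hqJ, rfl⟩ := Submodule.mem_sup.1 hf
  obtain ⟨h1, p', hp', hp⟩ := hI p hpI
  obtain ⟨h2, q', hq', hq⟩ := hJ q hqJ
  rw [map_add]
  exact ⟨Submodule.add_mem_sup h1 h2, p' + q', Submodule.add_mem_sup hp' hq',
    by linear_combination hp + hq⟩

lemma Free.smul {n s : ℕ} {I : Ideal (MvPolynomial (Fin n) k)} {g : MvPolynomial (Fin n) k}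
    (hg : sig k n s g = g) (hI : Free s I) : Free s (Ideal.span {g} * I) := by
  intro f hf
  obtain ⟨p, hpI, rfl⟩ := Ideal.mem_span_singleton_mul.1 hf
  obtain ⟨h1, p', hp', hp⟩ := hI p hpI
  rw [map_mul, hg]
  exact ⟨Ideal.mem_span_singleton_mul.2 ⟨_, h1, rfl⟩, g * p',
    Ideal.mem_span_singleton_mul.2 ⟨_, hp', rfl⟩, by linear_combination g * hp⟩

lemma Free.cancel {n s : ℕ} {I : Ideal (MvPolynomial (Fin n) k)} (hI : Free s I)
    (hs : 1 ≤ s ∧ s ≤ n) {f : MvPolynomial (Fin n) k} (h : Xv k n s * f ∈ I) : f ∈ I := by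
  obtain ⟨_, f', hf', e⟩ := hI _ h
  rw [map_mul, sig_self, zero_mul, zero_add] at e
  rwa [mul_left_cancel₀ (Xv_ne hs) e]

lemma chain {a p q : ℕ} {t : ℕ → ℕ} (h0 : p ≤ t 0) (h1 : t (a - 1) ≤ q)
    (h : ∀ j, j + 1 < a → t j + 2 ≤ t (j + 1)) : ∀ j < a, p ≤ t j ∧ t j ≤ q := by
  intro j hj
  constructor
  · induction j with
    | zero => exact h0
    | succ j ih => have := ih (by omega); have := h j hj; omega
  · obtain ⟨c, hc⟩ : ∃ c, j + c = a - 1 := ⟨a - 1 - j, by omega⟩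
    induction c generalizing j with
    | zero => simp at hc; rw [hc]; exact h1
    | succ c ih =>
      have := ih (j + 1) (by omega) (by omega)
      have := h j (by omega)
      omega

lemma Free.idealI {n s a p q : ℕ} (h : s < p ∨ q < s) : Free s (idealI k n a p q) := by
  apply Free.span
  rintro g ⟨t, h0, h1, h2, rfl⟩
  rw [map_prod]
  refine Finset.prod_congr rfl fun j hj => sig_ne ?_
  have := chain h0 h1 h2 j (Finset.mem_range.1 hj)
  omega

lemma map_idealI {n n' a p q : ℕ} (φ : MvPolynomial (Fin n) k →ₐ[k] MvPolynomial (Fin n') k)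
    (h : ∀ t, p ≤ t → t ≤ q → φ (Xv k n t) = Xv k n' t) {f : MvPolynomial (Fin n) k}
    (hf : f ∈ idealI k n a p q) : φ f ∈ idealI k n' a p q := by
  have : idealI k n a p q ≤ (idealI k n' a p q).comap φ := by
    refine Ideal.span_le.2 ?_
    rintro g ⟨t, h0, h1, h2, rfl⟩
    refine Ideal.subset_span ⟨t, h0, h1, h2, ?_⟩
    rw [map_prod]
    refine Finset.prod_congr rfl fun j hj => ?_
    have := chain h0 h1 h2 j (Finset.mem_range.1 hj)
    exact h _ this.1 this.2
  exact this hf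

lemma idealI_mono {n a p q p' q' : ℕ} (hp : p' ≤ p) (hq : q ≤ q') :
    idealI k n a p q ≤ idealI k n a p' q' := by
  refine Ideal.span_mono ?_
  rintro g ⟨t, h0, h1, h2, rfl⟩
  exact ⟨t, by omega, by omega, h2, rfl⟩

lemma idealI_drop {n b p q : ℕ} (hb : 1 ≤ b) :
    idealI k n (b + 1) p (q + 1) ≤ idealI k n b p q := by
  refine Ideal.span_le.2 ?_
  rintro g ⟨t, h0, h1, h2, rfl⟩
  rw [Finset.prod_range_succ]
  refine Ideal.mul_mem_right _ _ (Ideal.subset_span ⟨t, h0, ?_, fun j hj => h2 j (by omega), rfl⟩)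
  have := h2 (b - 1) (by omega)
  have e : b - 1 + 1 = b := by omega
  rw [e] at this
  simp at h1
  omega

lemma idealI_dec {n b p q : ℕ} (hb : 1 ≤ b) :
    idealI k n (b + 1) p (q + 2) = idealI k n (b + 1) p (q + 1) +
      Ideal.span {Xv k n (q + 2)} * idealI k n b p q := by
  apply le_antisymm
  · refine Ideal.span_le.2 ?_
    rintro g ⟨t, h0, h1, h2, rfl⟩
    simp only [Nat.add_sub_cancel] at h1
    by_cases h : t b ≤ q + 1
    · exact Submodule.mem_sup_left (Ideal.subset_span ⟨t, h0, by simpa using h, h2, rfl⟩)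
    · refine Submodule.mem_sup_right (Ideal.mem_span_singleton_mul.2
        ⟨∏ j ∈ Finset.range b, Xv k n (t j), Ideal.subset_span
          ⟨t, h0, ?_, fun j hj => h2 j (by omega), rfl⟩, ?_⟩)
      · have := h2 (b - 1) (by omega)
        have e : b - 1 + 1 = b := by omega
        rw [e] at this
        omega
      · have e : t b = q + 2 := by omega
        rw [Finset.prod_range_succ, e, mul_comm]
  · refine sup_le (idealI_mono le_rfl (by omega)) ?_
    intro f hf
    obtain ⟨g, hg, rfl⟩ := Ideal.mem_span_singleton_mul.1 hf
    induction hg using Submodule.span_induction with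
    | zero => simp
    | add x y hx hy h1 h2 =>
      rw [mul_add]
      exact add_mem (h1 (Ideal.mem_span_singleton_mul.2 ⟨_, hx, rfl⟩))
        (h2 (Ideal.mem_span_singleton_mul.2 ⟨_, hy, rfl⟩))
    | smul r x hx h1 =>
      rw [smul_eq_mul, mul_left_comm]
      exact Ideal.mul_mem_left _ _ (h1 (Ideal.mem_span_singleton_mul.2 ⟨_, hx, rfl⟩))
    | mem g hg =>
      obtain ⟨t, h0, h1, h2, rfl⟩ := hg
      refine Ideal.subset_span ⟨fun j => if j < b then t j else q + 2, ?_, ?_, ?_, ?_⟩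
      · simp [show 0 < b by omega, h0]
      · simp
      · intro j hj
        by_cases h : j + 1 < b
        · simp [h, show j < b by omega, h2 j h]
        · have : j = b - 1 := by omega
          simp [h, show j < b by omega]
          rw [this]; omega
      · rw [Finset.prod_range_succ, mul_comm]
        simp only [lt_irrefl, if_false]
        congr 1
        refine Finset.prod_congr rfl fun j hj => ?_
        rw [if_pos (Finset.mem_range.1 hj)]

noncomputable def phi (k : Type*) [Field k] (m : ℕ) :
    MvPolynomial (Fin (m + 3)) k →ₐ[k] MvPolynomial (Fin (m + 1)) k :=
  aeval (fun j : Fin (m + 3) => if j.val + 1 < m then Xv k (m + 1) (j.val + 1) else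
    if j.val + 1 = m then Xv k (m + 1) (m + 1) else
    if j.val + 1 = m + 3 then Xv k (m + 1) m else 0)

noncomputable def psi (k : Type*) [Field k] (m : ℕ) :
    MvPolynomial (Fin (m + 1)) k →ₐ[k] MvPolynomial (Fin (m + 3)) k :=
  aeval (fun j : Fin (m + 1) => if j.val + 1 < m then Xv k (m + 3) (j.val + 1) else
    if j.val + 1 = m then Xv k (m + 3) (m + 3) else Xv k (m + 3) m)

lemma phi_Xv {m t : ℕ} (h1 : 1 ≤ t) (h2 : t ≤ m + 3) : phi k m (Xv k (m + 3) t) =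
    if t < m then Xv k (m + 1) t else
    if t = m then Xv k (m + 1) (m + 1) else
    if t = m + 3 then Xv k (m + 1) m else 0 := by
  rw [Xv_pos ⟨h1, h2⟩, phi, aeval_X]
  simp [show t - 1 + 1 = t by omega]

lemma psi_Xv {m t : ℕ} (h1 : 1 ≤ t) (h2 : t ≤ m + 1) : psi k m (Xv k (m + 1) t) =
    if t < m then Xv k (m + 3) t else
    if t = m then Xv k (m + 3) (m + 3) else Xv k (m + 3) m := by
  rw [Xv_pos ⟨h1, h2⟩, psi, aeval_X]
  simp [show t - 1 + 1 = t by omega]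

lemma phi_psi (m : ℕ) (hm : 1 ≤ m) : (phi k m).comp (psi k m) = AlgHom.id k _ := by
  apply MvPolynomial.algHom_ext
  intro i
  rw [X_eq]
  have := i.2
  simp only [AlgHom.comp_apply, AlgHom.id_apply]
  rw [psi_Xv (by omega) (by omega)]
  split_ifs with h h'
  · rw [phi_Xv (by omega) (by omega), if_pos h]
  · rw [phi_Xv (by omega) (by omega)]; simp [h']
  · rw [phi_Xv (by omega) (by omega)]; simp [show i.val = m by omega]

/-- Transport of quotient along a pair of maps inverse modulo the ideals. -/
lemma quot_equiv {A B : Type*} [CommRing A] [CommRing B] [Algebra k A] [Algebra k B]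
    (P : Ideal A) (K : Ideal B) (φ : A →ₐ[k] B) (ψ : B →ₐ[k] A)
    (h1 : ∀ x ∈ P, φ x ∈ K) (h2 : ∀ x ∈ K, ψ x ∈ P)
    (h3 : (Ideal.Quotient.mkₐ k K).comp (φ.comp ψ) = Ideal.Quotient.mkₐ k K)
    (h4 : (Ideal.Quotient.mkₐ k P).comp (ψ.comp φ) = Ideal.Quotient.mkₐ k P) :
    Nonempty ((A ⧸ P) ≃ₐ[k] (B ⧸ K)) := by
  refine ⟨AlgEquiv.ofAlgHom
    (Ideal.Quotient.liftₐ P ((Ideal.Quotient.mkₐ k K).comp φ)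
      (fun x hx => Ideal.Quotient.eq_zero_iff_mem.2 (h1 x hx)))
    (Ideal.Quotient.liftₐ K ((Ideal.Quotient.mkₐ k P).comp ψ)
      (fun x hx => Ideal.Quotient.eq_zero_iff_mem.2 (h2 x hx))) ?_ ?_⟩
  · apply Ideal.Quotient.algHom_ext
    ext x
    exact DFunLike.congr_fun h3 x
  · apply Ideal.Quotient.algHom_ext
    ext x
    exact DFunLike.congr_fun h4 x

lemma nzd1 {A : Type*} [CommRing A] (Q : Ideal A) (z : A) (h : ∀ f, f * z ∈ Q → f ∈ Q) :
    Ideal.Quotient.mk Q z ∈ nonZeroDivisors (A ⧸ Q) := by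
  refine mem_nonZeroDivisors_iff_right.2 ?_
  intro x hx
  obtain ⟨f, rfl⟩ := Ideal.Quotient.mk_surjective x
  rw [← map_mul, Ideal.Quotient.eq_zero_iff_mem] at hx
  rw [Ideal.Quotient.eq_zero_iff_mem]
  exact h f hx

lemma nzd2 {A : Type*} [CommRing A] (Q : Ideal A) (z w : A)
    (h : ∀ f g, g * z - f * w ∈ Q → ∃ g', g' * z - f ∈ Q) :
    Ideal.Quotient.mk (Ideal.span {Ideal.Quotient.mk Q z}) (Ideal.Quotient.mk Q w) ∈
      nonZeroDivisors ((A ⧸ Q) ⧸ Ideal.span {Ideal.Quotient.mk Q z}) := by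
  refine mem_nonZeroDivisors_iff_right.2 ?_
  intro x hx
  obtain ⟨x, rfl⟩ := Ideal.Quotient.mk_surjective x
  obtain ⟨f, rfl⟩ := Ideal.Quotient.mk_surjective x
  rw [← map_mul, ← map_mul, Ideal.Quotient.eq_zero_iff_mem, Ideal.mem_span_singleton'] at hx
  rw [Ideal.Quotient.eq_zero_iff_mem, Ideal.mem_span_singleton']
  obtain ⟨g, hg⟩ := hx
  obtain ⟨g, rfl⟩ := Ideal.Quotient.mk_surjective g
  rw [← map_mul, Ideal.Quotient.eq] at hg
  obtain ⟨g', hg'⟩ := h f g hg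
  refine ⟨Ideal.Quotient.mk Q g', ?_⟩
  rw [← map_mul, Ideal.Quotient.eq]
  exact hg'

end UP

/-- Main theorem, `d` odd case. Let `d ≥ 5` be odd, `d + 1 < m`, `a = (d+1)/2`. In
`k[x_1,…,x_m,z_1,z_2,T]` (with `z_1, z_2, T` the last three variables) let
`Q = I_{a,2,m−1} + x_1x_m·I_{a−1,3,m−2} + T·I_{a−1,2,m−2} +
(z_1z_2T − x_1x_{m−1}x_m)·I_{a−2,3,m−3}` and `S = k[x_1,…,x_m,z_1,z_2,T]/Q`. Then the
images of `z_1, z_2` form a regular sequence on `S` (`z_1` is a non-zero-divisor of `S` and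
`z_2` is a non-zero-divisor of `S/(z_1)`), and
`S/(z_1,z_2) ≅ k[x_1,…,x_{m+1}]/(I_{a,2,m} + x_1x_{m+1}·I_{a−1,3,m−1}) = k[Δ(d,m+1)]`
as `k`-algebras. -/
theorem unprojection_cyclic_odd (k : Type*) [Field k] (d m : ℕ)
    (hd : Odd d) (hd5 : 5 ≤ d) (hm : d + 1 < m) (a : ℕ) (ha : a = (d + 1) / 2)
    (Q : Ideal (MvPolynomial (Fin (m + 3)) k))
    (hQ : Q = idealI k (m + 3) a 2 (m - 1) +
      Ideal.span {Xv k (m + 3) 1 * Xv k (m + 3) m} * idealI k (m + 3) (a - 1) 3 (m - 2) +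
      Ideal.span {Xv k (m + 3) (m + 3)} * idealI k (m + 3) (a - 1) 2 (m - 2) +
      Ideal.span {Xv k (m + 3) (m + 1) * Xv k (m + 3) (m + 2) * Xv k (m + 3) (m + 3) -
        Xv k (m + 3) 1 * Xv k (m + 3) (m - 1) * Xv k (m + 3) m} *
        idealI k (m + 3) (a - 2) 3 (m - 3)) :
    Ideal.Quotient.mk Q (Xv k (m + 3) (m + 1)) ∈
      nonZeroDivisors (MvPolynomial (Fin (m + 3)) k ⧸ Q) ∧
    Ideal.Quotient.mk (Ideal.span {Ideal.Quotient.mk Q (Xv k (m + 3) (m + 1))})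
        (Ideal.Quotient.mk Q (Xv k (m + 3) (m + 2))) ∈
      nonZeroDivisors ((MvPolynomial (Fin (m + 3)) k ⧸ Q) ⧸
        Ideal.span {Ideal.Quotient.mk Q (Xv k (m + 3) (m + 1))}) ∧
    Nonempty (((MvPolynomial (Fin (m + 3)) k ⧸ Q) ⧸
        Ideal.span {Ideal.Quotient.mk Q (Xv k (m + 3) (m + 1)),
          Ideal.Quotient.mk Q (Xv k (m + 3) (m + 2))}) ≃ₐ[k]
      (MvPolynomial (Fin (m + 1)) k ⧸
        (idealI k (m + 1) a 2 m + Ideal.span {Xv k (m + 1) 1 * Xv k (m + 1) (m + 1)} *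
          idealI k (m + 1) (a - 1) 3 (m - 1)))) := by
  classical
  obtain ⟨c, rfl⟩ : ∃ c, a = c + 3 := ⟨a - 3, by omega⟩
  obtain ⟨r, rfl⟩ : ∃ r, m = r + 4 := ⟨m - 4, by omega⟩
  clear ha hd hd5 hm
  simp only [show c + 3 - 1 = c + 2 by omega, show c + 3 - 2 = c + 1 by omega,
    show r + 4 - 1 = r + 3 by omega, show r + 4 - 2 = r + 2 by omega,
    show r + 4 - 3 = r + 1 by omega] at hQ ⊢
  set M := idealI k (r + 4 + 3) (c + 3) 2 (r + 3) +
      Ideal.span {Xv k (r + 4 + 3) 1 * Xv k (r + 4 + 3) (r + 4)} *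
        idealI k (r + 4 + 3) (c + 2) 3 (r + 2) +
      Ideal.span {Xv k (r + 4 + 3) (r + 4 + 3)} * idealI k (r + 4 + 3) (c + 2) 2 (r + 2) with hM
  set N := idealI k (r + 4 + 3) (c + 1) 3 (r + 1) with hN
  set J := idealI k (r + 4 + 3) (c + 2) 2 (r + 2) with hJ
  set z1 := Xv k (r + 4 + 3) (r + 4 + 1) with hz1
  set z2 := Xv k (r + 4 + 3) (r + 4 + 2) with hz2
  set T := Xv k (r + 4 + 3) (r + 4 + 3) with hT
  set u := Xv k (r + 4 + 3) 1 * Xv k (r + 4 + 3) (r + 3) * Xv k (r + 4 + 3) (r + 4) with hu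
  have hMQ : M ≤ Q := hQ ▸ le_sup_left
  have hNQ : ∀ f ∈ N, (z1 * z2 * T - u) * f ∈ Q := fun f hf => by
    rw [hQ]
    exact Submodule.mem_sup_right (Ideal.mem_span_singleton_mul.2 ⟨f, hf, rfl⟩)
  have hTJ : ∀ f ∈ J, T * f ∈ M := fun f hf =>
    Submodule.mem_sup_right (Ideal.mem_span_singleton_mul.2 ⟨f, hf, rfl⟩)
  have hMJ : M ≤ J := by
    refine sup_le (sup_le (UP.idealI_drop (by omega)) ?_) Ideal.mul_le_right
    exact Ideal.mul_le_right.trans (UP.idealI_mono (by omega) le_rfl)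
  have huJ : ∀ f, u * f ∈ J → f ∈ J := by
    intro f hf
    have F1 : UP.Free 1 J := UP.Free.idealI (by omega)
    have F2 : UP.Free (r + 3) J := UP.Free.idealI (by omega)
    have F3 : UP.Free (r + 4) J := UP.Free.idealI (by omega)
    rw [hu, mul_assoc, mul_assoc] at hf
    exact F3.cancel (by omega) (F2.cancel (by omega) (F1.cancel (by omega) hf))
  have freeM : ∀ s, s = r + 4 + 1 ∨ s = r + 4 + 2 → UP.Free s M := by
    intro s hs
    refine (UP.Free.sup (UP.Free.idealI (by omega)) (UP.Free.smul ?_ (UP.Free.idealI (by omega)))).sup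
      (UP.Free.smul ?_ (UP.Free.idealI (by omega)))
    · rw [map_mul, UP.sig_ne (by omega), UP.sig_ne (by omega)]
    · rw [UP.sig_ne (by omega)]
  have sigu : ∀ s, s = r + 4 + 1 ∨ s = r + 4 + 2 → UP.sig k (r + 4 + 3) s u = u := by
    intro s hs
    rw [hu, map_mul, map_mul, UP.sig_ne (by omega), UP.sig_ne (by omega), UP.sig_ne (by omega)]
  have freeN : ∀ s, s = r + 4 + 1 ∨ s = r + 4 + 2 → UP.Free s N := fun s hs =>
    UP.Free.idealI (by omega)
  have z1ne : z1 ≠ 0 := UP.Xv_ne (by omega)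
  refine ⟨?_, ?_, ?_⟩
  · refine UP.nzd1 _ _ ?_
    intro f hx
    rw [hQ] at hx
    obtain ⟨μ, hμ, y, hy, e⟩ := Submodule.mem_sup.1 hx
    obtain ⟨ν, hν, rfl⟩ := Ideal.mem_span_singleton_mul.1 hy
    obtain ⟨s1, μ', hμ', e1⟩ := freeM _ (Or.inl rfl) μ hμ
    obtain ⟨s2, ν', hν', e2⟩ := freeN _ (Or.inl rfl) ν hν
    have e3 := congrArg (UP.sig k (r + 4 + 3) (r + 4 + 1)) e
    simp only [map_add, map_mul, map_sub, sigu _ (Or.inl rfl)] at e3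
    rw [hz1, UP.sig_self] at e3
    set μ0 := UP.sig k (r + 4 + 3) (r + 4 + 1) μ
    set ν0 := UP.sig k (r + 4 + 3) (r + 4 + 1) ν
    have e4 : u * ν0 = μ0 := by linear_combination -e3
    have hν0 : ν0 ∈ J := huJ _ (hMJ (e4 ▸ s1))
    have e5 : f = μ' + (z1 * z2 * T - u) * ν' + z2 * (T * ν0) := by
      apply mul_left_cancel₀ z1ne
      rw [← hz1] at e1 e2
      linear_combination -e + e1 + (z1 * z2 * T - u) * e2 - e4
    rw [e5]
    exact add_mem (add_mem (hMQ hμ') (hNQ _ hν')) (Ideal.mul_mem_left _ _ (hMQ (hTJ _ hν0)))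
  · refine UP.nzd2 _ _ _ ?_
    intro f g hg
    set P := M + Ideal.span {u} * N + Ideal.span {z1} with hP
    have hPz : z1 ∈ P := Submodule.mem_sup_right (Ideal.mem_span_singleton_self _)
    have hQP : Q ≤ P := by
      rw [hQ]
      refine sup_le (le_sup_left.trans le_sup_left) ?_
      intro y hy
      obtain ⟨ν, hν, rfl⟩ := Ideal.mem_span_singleton_mul.1 hy
      have h1 : u * ν ∈ P := Submodule.mem_sup_left (Submodule.mem_sup_right
        (Ideal.mem_span_singleton_mul.2 ⟨ν, hν, rfl⟩))
      have : (z1 * z2 * T - u) * ν = (z2 * T * ν) * z1 - u * ν := by ring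
      rw [this]
      exact sub_mem (Ideal.mul_mem_left _ _ hPz) h1
    have freeP : UP.Free (r + 4 + 2) P := by
      refine ((freeM _ (Or.inr rfl)).sup
        (UP.Free.smul (sigu _ (Or.inr rfl)) (freeN _ (Or.inr rfl)))).sup (UP.Free.span ?_)
      intro g hg
      rw [Set.mem_singleton_iff.1 hg, hz1, UP.sig_ne (by omega)]
    have hfP : z2 * f ∈ P := by
      have : z2 * f = g * z1 - (g * z1 - f * z2) := by ring
      rw [this]
      exact sub_mem (Ideal.mul_mem_left _ _ hPz) (hQP hg)
    have hf := freeP.cancel (by omega) hfP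
    obtain ⟨y, hy, w, hw, e⟩ := Submodule.mem_sup.1 hf
    obtain ⟨μ, hμ, v, hv, rfl⟩ := Submodule.mem_sup.1 hy
    obtain ⟨ν, hν, rfl⟩ := Ideal.mem_span_singleton_mul.1 hv
    obtain ⟨h, rfl⟩ := Ideal.mem_span_singleton'.1 hw
    refine ⟨h + z2 * T * ν, ?_⟩
    have : (h + z2 * T * ν) * z1 - f = (z1 * z2 * T - u) * ν - μ := by
      linear_combination e
    rw [this]
    exact sub_mem (hNQ _ hν) (hMQ hμ)
  · have hspan : Ideal.span {Ideal.Quotient.mk Q z1, Ideal.Quotient.mk Q z2} =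
        (Ideal.span {z1, z2}).map (Ideal.Quotient.mkₐ k Q) := by
      rw [Ideal.map_span, Set.image_pair]; rfl
    rw [hspan]
    set P := Q ⊔ Ideal.span {z1, z2} with hP
    have hz1P : z1 ∈ P := Submodule.mem_sup_right (Ideal.subset_span (by simp))
    have hz2P : z2 ∈ P := Submodule.mem_sup_right (Ideal.subset_span (by simp))
    have d1 := UP.idealI_dec (k := k) (n := r + 4 + 1) (b := c + 2) (p := 2) (q := r + 2) (by omega)
    have d2 := UP.idealI_dec (k := k) (n := r + 4 + 1) (b := c + 1) (p := 3) (q := r + 1) (by omega)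
    set K := idealI k (r + 4 + 1) (c + 2 + 1) 2 (r + 2 + 1) +
        Ideal.span {Xv k (r + 4 + 1) (r + 2 + 2)} * idealI k (r + 4 + 1) (c + 2) 2 (r + 2) +
      Ideal.span {Xv k (r + 4 + 1) 1 * Xv k (r + 4 + 1) (r + 4 + 1)} *
        (idealI k (r + 4 + 1) (c + 1 + 1) 3 (r + 1 + 1) +
          Ideal.span {Xv k (r + 4 + 1) (r + 1 + 2)} * idealI k (r + 4 + 1) (c + 1) 3 (r + 1)) with hK
    obtain ⟨e⟩ : Nonempty ((MvPolynomial (Fin (r + 4 + 3)) k ⧸ P) ≃ₐ[k]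
        (MvPolynomial (Fin (r + 4 + 1)) k ⧸ K)) := by
      have φv : ∀ t, 1 ≤ t → t ≤ r + 3 →
          UP.phi k (r + 4) (Xv k (r + 4 + 3) t) = Xv k (r + 4 + 1) t := by
        intro t h1 h2
        rw [UP.phi_Xv (by omega) (by omega), if_pos (by omega)]
      have ψv : ∀ t, 1 ≤ t → t ≤ r + 3 →
          UP.psi k (r + 4) (Xv k (r + 4 + 1) t) = Xv k (r + 4 + 3) t := by
        intro t h1 h2
        rw [UP.psi_Xv (by omega) (by omega), if_pos (by omega)]
      have φm : UP.phi k (r + 4) (Xv k (r + 4 + 3) (r + 4)) = Xv k (r + 4 + 1) (r + 4 + 1) := by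
        rw [UP.phi_Xv (by omega) (by omega)]; simp
      have φ1 : UP.phi k (r + 4) z1 = 0 := by
        rw [UP.phi_Xv (by omega) (by omega)]; simp
      have φ2 : UP.phi k (r + 4) z2 = 0 := by
        rw [UP.phi_Xv (by omega) (by omega)]; simp
      have φT : UP.phi k (r + 4) T = Xv k (r + 4 + 1) (r + 4) := by
        rw [UP.phi_Xv (by omega) (by omega)]; simp
      have ψm : UP.psi k (r + 4) (Xv k (r + 4 + 1) (r + 4)) = T := by
        rw [UP.psi_Xv (by omega) (by omega)]; simp [hT]
      have ψn : UP.psi k (r + 4) (Xv k (r + 4 + 1) (r + 4 + 1)) = Xv k (r + 4 + 3) (r + 4) := by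
        rw [UP.psi_Xv (by omega) (by omega)]; simp
      apply UP.quot_equiv P K (UP.phi k (r + 4)) (UP.psi k (r + 4))
      · suffices h : P ≤ K.comap (UP.phi k (r + 4)) from fun x hx => h hx
        rw [hP, hQ]
        refine sup_le (sup_le (sup_le (sup_le ?_ ?_) ?_) ?_) ?_
        · intro f hf
          exact Submodule.mem_sup_left (Submodule.mem_sup_left
            (UP.map_idealI _ (fun t h1 h2 => φv t (by omega) (by omega)) hf))
        · intro f hf
          obtain ⟨g, hg, rfl⟩ := Ideal.mem_span_singleton_mul.1 hf
          rw [Ideal.mem_comap, map_mul, map_mul, φv 1 (by omega) (by omega), φm]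
          exact Submodule.mem_sup_right (Ideal.mem_span_singleton_mul.2 ⟨_,
            Submodule.mem_sup_left
              (UP.map_idealI _ (fun t h1 h2 => φv t (by omega) (by omega)) hg), rfl⟩)
        · intro f hf
          obtain ⟨g, hg, rfl⟩ := Ideal.mem_span_singleton_mul.1 hf
          rw [Ideal.mem_comap, map_mul, φT]
          exact Submodule.mem_sup_left (Submodule.mem_sup_right (Ideal.mem_span_singleton_mul.2
            ⟨_, UP.map_idealI _ (fun t h1 h2 => φv t (by omega) (by omega)) hg, rfl⟩))
        · intro f hf
          obtain ⟨g, hg, rfl⟩ := Ideal.mem_span_singleton_mul.1 hf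
          rw [Ideal.mem_comap, map_mul, map_sub, map_mul, map_mul, φ1, hu, map_mul, map_mul,
            φv 1 (by omega) (by omega), φv (r + 3) (by omega) (by omega), φm]
          refine Submodule.mem_sup_right (Ideal.mem_span_singleton_mul.2 ⟨_,
            Submodule.mem_sup_right (Ideal.mem_span_singleton_mul.2 ⟨_, neg_mem
              (UP.map_idealI _ (fun t h1 h2 => φv t (by omega) (by omega)) hg), rfl⟩), ?_⟩)
          ring
        · rw [Ideal.span_le]
          rintro f (rfl | rfl)
          · simp [φ1]
          · simp [φ2]
      · suffices h : K ≤ P.comap (UP.psi k (r + 4)) from fun x hx => h hx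
        rw [hK, mul_add]
        have hMP : M ≤ P := hMQ.trans le_sup_left
        refine sup_le (sup_le ?_ ?_) (sup_le ?_ ?_)
        · intro f hf
          exact hMP (Submodule.mem_sup_left (Submodule.mem_sup_left
            (UP.map_idealI _ (fun t h1 h2 => ψv t (by omega) (by omega)) hf)))
        · intro f hf
          obtain ⟨g, hg, rfl⟩ := Ideal.mem_span_singleton_mul.1 hf
          rw [Ideal.mem_comap, map_mul, ψm]
          exact hMP (hTJ _ (UP.map_idealI _ (fun t h1 h2 => ψv t (by omega) (by omega)) hg))
        · intro f hf
          obtain ⟨g, hg, rfl⟩ := Ideal.mem_span_singleton_mul.1 hf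
          rw [Ideal.mem_comap, map_mul, map_mul, ψv 1 (by omega) (by omega), ψn]
          exact hMP (Submodule.mem_sup_left (Submodule.mem_sup_right
            (Ideal.mem_span_singleton_mul.2 ⟨_,
              UP.map_idealI _ (fun t h1 h2 => ψv t (by omega) (by omega)) hg, rfl⟩)))
        · intro f hf
          obtain ⟨g', hg', rfl⟩ := Ideal.mem_span_singleton_mul.1 hf
          obtain ⟨g, hg, rfl⟩ := Ideal.mem_span_singleton_mul.1 hg'
          rw [Ideal.mem_comap, map_mul, map_mul, map_mul, ψv 1 (by omega) (by omega), ψn,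
            ψv (r + 1 + 2) (by omega) (by omega)]
          have hg2 : UP.psi k (r + 4) g ∈ N :=
            UP.map_idealI _ (fun t h1 h2 => ψv t (by omega) (by omega)) hg
          have h1 : (z1 * z2 * T - u) * UP.psi k (r + 4) g ∈ P :=
            Submodule.mem_sup_left (hNQ _ hg2)
          have h2 := P.sub_mem (P.mul_mem_left (z2 * T * UP.psi k (r + 4) g) hz1P) h1
          convert h2 using 1
          rw [hu]
          ring
      · rw [UP.phi_psi _ (by omega)]; rfl
      · apply MvPolynomial.algHom_ext
        intro i
        have hi := i.2
        rw [UP.X_eq]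
        simp only [AlgHom.comp_apply]
        rcases (by omega : i.val + 1 ≤ r + 3 ∨ i.val + 1 = r + 4 ∨ i.val + 1 = r + 4 + 1 ∨
          i.val + 1 = r + 4 + 2 ∨ i.val + 1 = r + 4 + 3) with h | h | h | h | h
        · rw [φv _ (by omega) h, ψv _ (by omega) h]
        · rw [h, φm, ψn]
        · rw [h, φ1, map_zero, map_zero]
          exact (Ideal.Quotient.eq_zero_iff_mem.2 hz1P).symm
        · rw [h, φ2, map_zero, map_zero]
          exact (Ideal.Quotient.eq_zero_iff_mem.2 hz2P).symm
        · rw [h, φT, ψm]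
    have hKK : K = idealI k (r + 4 + 1) (c + 3) 2 (r + 4) +
        Ideal.span {Xv k (r + 4 + 1) 1 * Xv k (r + 4 + 1) (r + 4 + 1)} *
          idealI k (r + 4 + 1) (c + 3 - 1) 3 (r + 4 - 1) := by
      rw [hK, ← d1, ← d2]
      rfl
    exact ⟨((DoubleQuot.quotQuotEquivQuotSupₐ k Q (Ideal.span {z1, z2})).trans e).trans
      (Ideal.quotientEquivAlgOfEq k hKK)⟩
end

section
/- Let k be a field and m an integer with m ≥ 5. In k[x_1,…,x_m,z_1,z_2,T] let Q = I_{2,2,m−1} + x_1x_m·I_{1,3,m−2} + T·I_{1,2,m−2} + (z_1z_2T − x_1x_{m−1}x_m), and set S = k[x_1,…,x_m,z_1,z_2,T]/Q. Then the images of z_1, z_2 form a regular sequence on S, and S/(z_1,z_2) is isomorphic as a k-algebra to k[x_1,…,x_{m+1}]/(I_{2,2,m} + x_1x_{m+1}·I_{1,3,m−1}), which is the Stanley–Reisner ring k[Δ(3,m+1)] of the boundary complex of the 3-dimensional cyclic polytope with m+1 vertices. -/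
set_option synthInstance.maxHeartbeats 1000000
set_option maxHeartbeats 1000000


section helpers
open MvPolynomial

variable {k : Type*} [Field k] {n : ℕ}

lemma up_idealI_one_le {p q : ℕ} {K : Ideal (MvPolynomial (Fin n) k)}
    (h : ∀ i, p ≤ i → i ≤ q → Xv k n i ∈ K) : idealI k n 1 p q ≤ K := by
  refine Ideal.span_le.2 ?_
  rintro f ⟨t, h0, h1, -, rfl⟩
  simpa using h (t 0) h0 h1

lemma up_idealI_two_le {p q : ℕ} {K : Ideal (MvPolynomial (Fin n) k)}
    (h : ∀ i j, p ≤ i → i + 2 ≤ j → j ≤ q → Xv k n i * Xv k n j ∈ K) :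
    idealI k n 2 p q ≤ K := by
  refine Ideal.span_le.2 ?_
  rintro f ⟨t, h0, h1, h2, rfl⟩
  simpa [Finset.prod_range_succ] using h (t 0) (t 1) h0 (h2 0 (by norm_num)) h1

lemma up_mem_one {p q i : ℕ} (h1 : p ≤ i) (h2 : i ≤ q) : Xv k n i ∈ idealI k n 1 p q := by
  refine Ideal.subset_span ⟨fun _ => i, h1, h2, ?_, by simp⟩
  intro j hj; omega

lemma up_mem_two {p q i j : ℕ} (h1 : p ≤ i) (h : i + 2 ≤ j) (h2 : j ≤ q) :
    Xv k n i * Xv k n j ∈ idealI k n 2 p q := by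
  refine Ideal.subset_span ⟨fun l => if l = 0 then i else j, by simpa using h1,
    by simpa using h2, ?_, by simp [Finset.prod_range_succ]⟩
  intro l hl
  obtain rfl : l = 0 := by omega
  simpa using h

/-- substitution -/
noncomputable def upSub {B : Type*} [CommRing B] [Algebra k B] (n : ℕ) (s : ℕ → B) :
    MvPolynomial (Fin n) k →ₐ[k] B := aeval (fun i : Fin n => s (i + 1))

lemma upSub_Xv {B : Type*} [CommRing B] [Algebra k B] (s : ℕ → B) {t : ℕ} (h1 : 1 ≤ t)
    (h2 : t ≤ n) : upSub n s (Xv k n t) = s t := by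
  simp [upSub, Xv, h1, h2]

lemma up_X_eq (i : Fin n) : (X i : MvPolynomial (Fin n) k) = Xv k n (i + 1) := by
  have := i.2
  simp [Xv]

lemma Xv_ne_zero {t : ℕ} (h1 : 1 ≤ t) (h2 : t ≤ n) : Xv k n t ≠ 0 := by
  simp [Xv, h1, h2]

/-- If an endomorphism fixes all variables modulo `K`, it fixes everything modulo `K`. -/
lemma up_sub_mem (φ : MvPolynomial (Fin n) k →ₐ[k] MvPolynomial (Fin n) k)
    (K : Ideal (MvPolynomial (Fin n) k))
    (h : ∀ t, 1 ≤ t → t ≤ n → Xv k n t - φ (Xv k n t) ∈ K) (f : MvPolynomial (Fin n) k) :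
    f - φ f ∈ K := by
  rw [← Ideal.Quotient.eq]
  have : (Ideal.Quotient.mkₐ k K) = (Ideal.Quotient.mkₐ k K).comp φ := by
    refine MvPolynomial.algHom_ext fun i => ?_
    have hi := i.2
    simp only [AlgHom.comp_apply, up_X_eq]
    exact Ideal.Quotient.eq.2 (h _ (by omega) (by omega))
  exact DFunLike.congr_fun this f

lemma up_iso {A B : Type*} [CommRing A] [CommRing B] [Algebra k A] [Algebra k B]
    (K : Ideal A) (L : Ideal B) (F : A →ₐ[k] B) (G : B →ₐ[k] A)
    (hF : K ≤ L.comap F) (hG : L ≤ K.comap G) (hFG : ∀ b, b - F (G b) ∈ L)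
    (hGF : ∀ a, a - G (F a) ∈ K) : Nonempty ((A ⧸ K) ≃ₐ[k] (B ⧸ L)) := by
  refine ⟨AlgEquiv.ofAlgHom (Ideal.quotientMapₐ L F hF) (Ideal.quotientMapₐ K G hG) ?_ ?_⟩
  · ext x
    obtain ⟨b, rfl⟩ := Ideal.Quotient.mk_surjective x
    exact (Ideal.Quotient.eq.2 (hFG b)).symm
  · ext x
    obtain ⟨a, rfl⟩ := Ideal.Quotient.mk_surjective x
    exact (Ideal.Quotient.eq.2 (hGF a)).symm

/-- divide by the `z`-th variable -/
noncomputable def upD (z : Fin n) (f : MvPolynomial (Fin n) k) : MvPolynomial (Fin n) k :=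
  f.divMonomial (Finsupp.single z 1)

def upGood (z : Fin n) (g : MvPolynomial (Fin n) k) : Prop :=
  ∀ a, upD z (a * g) = upD z a * g

def upGoodI (z : Fin n) (K : Ideal (MvPolynomial (Fin n) k)) : Prop :=
  ∀ x ∈ K, ∀ a, upD z (a * x) ∈ K

lemma upGood.mul {z : Fin n} {g h : MvPolynomial (Fin n) k} (hg : upGood z g)
    (hh : upGood z h) : upGood z (g * h) := by
  intro a
  rw [← mul_assoc, hh, hg, mul_assoc]

lemma upGood_Xv {z : Fin n} {t : ℕ} (ht : t ≠ z + 1) : upGood z (Xv k n t) := by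
  intro a
  unfold Xv
  split_ifs with h
  · have hne : z ≠ ⟨t - 1, by omega⟩ := by
      intro h'
      have := congrArg Fin.val h'
      simp at this
      omega
    ext d
    simp only [upD, coeff_divMonomial, coeff_mul_X', Finsupp.mem_support_iff, Finsupp.add_apply,
      Finsupp.single_eq_of_ne hne.symm, zero_add]
    split_ifs with h0
    · congr 1
      ext i
      simp only [Finsupp.add_apply, Finsupp.tsub_apply]
      by_cases hi : i = ⟨t - 1, by omega⟩
      · subst hi
        simp [Finsupp.single_eq_of_ne hne.symm]
      · simp [Finsupp.single_eq_of_ne hi]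
    · rfl
  · simp [upD]

lemma upGoodI_span {z : Fin n} {G : Set (MvPolynomial (Fin n) k)} (h : ∀ g ∈ G, upGood z g) :
    upGoodI z (Ideal.span G) := by
  intro x hx
  induction hx using Submodule.span_induction with
  | mem x hx =>
    intro a
    rw [h x hx]
    exact Ideal.mul_mem_left _ _ (Ideal.subset_span hx)
  | zero => intro a; simp [upD]
  | add x y _ _ hx hy =>
    intro a
    have : upD z (a * (x + y)) = upD z (a * x) + upD z (a * y) := by
      rw [mul_add]; exact add_divMonomial _ _ _
    rw [this]
    exact Ideal.add_mem _ (hx a) (hy a)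
  | smul b x _ hx =>
    intro a
    rw [smul_eq_mul, ← mul_assoc]
    exact hx _

lemma upGoodI.add {z : Fin n} {K L : Ideal (MvPolynomial (Fin n) k)} (hK : upGoodI z K)
    (hL : upGoodI z L) : upGoodI z (K + L) := by
  intro x hx a
  obtain ⟨u, hu, v, hv, rfl⟩ := Submodule.mem_sup.1 hx
  have : upD z (a * (u + v)) = upD z (a * u) + upD z (a * v) := by
    rw [mul_add]; exact add_divMonomial _ _ _
  rw [this]
  exact Submodule.add_mem_sup (hK u hu a) (hL v hv a)

lemma upGoodI.smul {z : Fin n} {g : MvPolynomial (Fin n) k} {K : Ideal (MvPolynomial (Fin n) k)} (hg : upGood z g)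
    (hK : upGoodI z K) : upGoodI z (Ideal.span {g} * K) := by
  intro x hx a
  obtain ⟨u, hu, rfl⟩ := Ideal.mem_span_singleton_mul.1 hx
  have : a * (g * u) = a * u * g := by ring
  rw [this, hg]
  exact Ideal.mem_span_singleton_mul.2 ⟨upD z (a * u), hK u hu a, mul_comm _ _⟩

lemma upGoodI_idealI {z : Fin n} {a p q : ℕ} (hq : q < z + 1) :
    upGoodI z (idealI k n a p q) := by
  refine upGoodI_span ?_
  rintro g ⟨t, h0, h1, h2, rfl⟩
  have key : ∀ j, j < a → t (a - 1 - j) ≤ q := by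
    intro j
    induction j with
    | zero => intro _; simpa using h1
    | succ j ih =>
      intro hj
      have e1 := ih (by omega)
      have e2 := h2 (a - 1 - (j + 1)) (by omega)
      have e3 : a - 1 - (j + 1) + 1 = a - 1 - j := by omega
      rw [e3] at e2
      omega
  refine Finset.prod_induction (fun j => Xv k n (t j)) (upGood z) (fun _ _ => upGood.mul) ?_ ?_
  · intro b; simp
  · intro j hj
    refine upGood_Xv ?_
    have hj' := Finset.mem_range.1 hj
    have := key (a - 1 - j) (by omega)
    have e : a - 1 - (a - 1 - j) = j := by omega
    rw [e] at this
    omega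

lemma upGoodI.cancel {z : Fin n} {K : Ideal (MvPolynomial (Fin n) k)} (hK : upGoodI z K)
    {f : MvPolynomial (Fin n) k} (h : Xv k n (z + 1) * f ∈ K) : f ∈ K := by
  have := hK _ h 1
  rw [← up_X_eq, one_mul, upD, X_mul_divMonomial] at this
  exact this

/-- The monomial part of `Q`. -/
noncomputable def upJ (k : Type*) [Field k] (m : ℕ) : Ideal (MvPolynomial (Fin (m + 3)) k) :=
  idealI k (m + 3) 2 2 (m - 1) +
      Ideal.span {Xv k (m + 3) 1 * Xv k (m + 3) m} * idealI k (m + 3) 1 3 (m - 2) +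
      Ideal.span {Xv k (m + 3) (m + 3)} * idealI k (m + 3) 1 2 (m - 2)

lemma upJ_le {m : ℕ} {K : Ideal (MvPolynomial (Fin (m + 3)) k)}
    (h1 : ∀ i j, 2 ≤ i → i + 2 ≤ j → j ≤ m - 1 → Xv k (m + 3) i * Xv k (m + 3) j ∈ K)
    (h2 : ∀ i, 3 ≤ i → i ≤ m - 2 → Xv k (m + 3) 1 * Xv k (m + 3) m * Xv k (m + 3) i ∈ K)
    (h3 : ∀ i, 2 ≤ i → i ≤ m - 2 → Xv k (m + 3) (m + 3) * Xv k (m + 3) i ∈ K) :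
    upJ k m ≤ K := by
  refine sup_le (sup_le (up_idealI_two_le h1) ?_) ?_
  · rw [idealI, Ideal.span_mul_span', Ideal.span_le]
    rintro _ ⟨a, ha, b, ⟨t, e0, e1, -, rfl⟩, rfl⟩
    rw [Set.mem_singleton_iff] at ha
    subst ha
    simpa using h2 (t 0) e0 e1
  · rw [idealI, Ideal.span_mul_span', Ideal.span_le]
    rintro _ ⟨a, ha, b, ⟨t, e0, e1, -, rfl⟩, rfl⟩
    rw [Set.mem_singleton_iff] at ha
    subst ha
    simpa using h3 (t 0) e0 e1

lemma upJ_mem1 {m i j : ℕ} (h1 : 2 ≤ i) (h : i + 2 ≤ j) (h2 : j ≤ m - 1) :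
    Xv k (m + 3) i * Xv k (m + 3) j ∈ upJ k m :=
  Ideal.mem_sup_left (Ideal.mem_sup_left (up_mem_two h1 h h2))

lemma upJ_mem2 {m i : ℕ} (h1 : 3 ≤ i) (h2 : i ≤ m - 2) :
    Xv k (m + 3) 1 * Xv k (m + 3) m * Xv k (m + 3) i ∈ upJ k m :=
  Ideal.mem_sup_left (Ideal.mem_sup_right
    (Ideal.mul_mem_mul (Ideal.mem_span_singleton_self _) (up_mem_one h1 h2)))

lemma upJ_mem3 {m i : ℕ} (h1 : 2 ≤ i) (h2 : i ≤ m - 2) :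
    Xv k (m + 3) (m + 3) * Xv k (m + 3) i ∈ upJ k m :=
  Ideal.mem_sup_right
    (Ideal.mul_mem_mul (Ideal.mem_span_singleton_self _) (up_mem_one h1 h2))

lemma upJ_good {m : ℕ} (hm : 5 ≤ m) (z : Fin (m + 3)) (h1 : m ≤ z) (h2 : (z : ℕ) ≤ m + 1) :
    upGoodI z (upJ k m) := by
  refine ((upGoodI_idealI (by omega)).add (upGoodI.smul ?_ (upGoodI_idealI (by omega)))).add
    (upGoodI.smul ?_ (upGoodI_idealI (by omega)))
  · exact (upGood_Xv (by omega)).mul (upGood_Xv (by omega))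
  · exact upGood_Xv (by omega)

/-- regularity of `z_1` -/
lemma up_reg1 {m : ℕ} (hm : 5 ≤ m) (f : MvPolynomial (Fin (m + 3)) k)
    (hf : Xv k (m + 3) (m + 1) * f ∈ upJ k m +
      Ideal.span {Xv k (m + 3) (m + 1) * Xv k (m + 3) (m + 2) * Xv k (m + 3) (m + 3) -
        Xv k (m + 3) 1 * Xv k (m + 3) (m - 1) * Xv k (m + 3) m}) :
    f ∈ upJ k m +
      Ideal.span {Xv k (m + 3) (m + 1) * Xv k (m + 3) (m + 2) * Xv k (m + 3) (m + 3) -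
        Xv k (m + 3) 1 * Xv k (m + 3) (m - 1) * Xv k (m + 3) m} := by
  set g := Xv k (m + 3) (m + 1) * Xv k (m + 3) (m + 2) * Xv k (m + 3) (m + 3) -
        Xv k (m + 3) 1 * Xv k (m + 3) (m - 1) * Xv k (m + 3) m with hg
  obtain ⟨j, hj, w, hw, hjw⟩ := Submodule.mem_sup.1 hf
  obtain ⟨h, rfl⟩ := Ideal.mem_span_singleton'.1 hw
  let s : ℕ → MvPolynomial (Fin (m + 3)) k := fun t =>
    if (2 ≤ t ∧ t ≤ m - 2) ∨ t = m + 1 then 0 else Xv k (m + 3) t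
  have s0 : ∀ t, 1 ≤ t → t ≤ m + 3 → ((2 ≤ t ∧ t ≤ m - 2) ∨ t = m + 1) →
      upSub (m + 3) s (Xv k (m + 3) t) = 0 := by
    intro t h1 h2 h3
    rw [upSub_Xv s h1 h2]
    exact if_pos h3
  have s1 : ∀ t, 1 ≤ t → t ≤ m + 3 → ¬ ((2 ≤ t ∧ t ≤ m - 2) ∨ t = m + 1) →
      upSub (m + 3) s (Xv k (m + 3) t) = Xv k (m + 3) t := by
    intro t h1 h2 h3
    rw [upSub_Xv s h1 h2]
    exact if_neg h3
  have hJ0 : upJ k m ≤ RingHom.ker (upSub (m + 3) s) := by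
    refine upJ_le ?_ ?_ ?_
    · intro a b h1 h2 h3
      rw [RingHom.mem_ker, map_mul, s0 a (by omega) (by omega) (by omega), zero_mul]
    · intro a h1 h2
      rw [RingHom.mem_ker, map_mul, s0 a (by omega) (by omega) (by omega), mul_zero]
    · intro a h1 h2
      rw [RingHom.mem_ker, map_mul, s0 a (by omega) (by omega) (by omega), mul_zero]
  have hh : upSub (m + 3) s h = 0 := by
    have e := congrArg (upSub (m + 3) s) hjw
    rw [map_add, (RingHom.mem_ker).1 (hJ0 hj), map_mul, map_mul, hg, map_sub, map_mul, map_mul,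
      map_mul, map_mul, s0 (m + 1) (by omega) (by omega) (by omega),
      s1 1 (by omega) (by omega) (by omega), s1 (m - 1) (by omega) (by omega) (by omega),
      s1 m (by omega) (by omega) (by omega)] at e
    have e' : upSub (m + 3) s h * (Xv k (m + 3) 1 * Xv k (m + 3) (m - 1) * Xv k (m + 3) m) = 0 := by
      linear_combination -e
    refine (mul_eq_zero.1 e').resolve_right ?_
    exact mul_ne_zero (mul_ne_zero (Xv_ne_zero (by omega) (by omega))
      (Xv_ne_zero (by omega) (by omega))) (Xv_ne_zero (by omega) (by omega))
  have hmem : h ∈ idealI k (m + 3) 1 2 (m - 2) + Ideal.span {Xv k (m + 3) (m + 1)} := by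
    have := up_sub_mem (upSub (m + 3) s)
      (idealI k (m + 3) 1 2 (m - 2) + Ideal.span {Xv k (m + 3) (m + 1)}) ?_ h
    · simpa [hh] using this
    · intro t h1 h2
      by_cases h3 : (2 ≤ t ∧ t ≤ m - 2) ∨ t = m + 1
      · rw [s0 t h1 h2 h3, sub_zero]
        rcases h3 with h3 | rfl
        · exact Ideal.mem_sup_left (up_mem_one h3.1 h3.2)
        · exact Ideal.mem_sup_right (Ideal.mem_span_singleton_self _)
      · rw [s1 t h1 h2 h3, sub_self]
        exact Ideal.zero_mem _
  obtain ⟨u, hu, v, hv, rfl⟩ := Submodule.mem_sup.1 hmem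
  obtain ⟨c, rfl⟩ := Ideal.mem_span_singleton'.1 hv
  have hug : u * g ∈ upJ k m := by
    have hle : idealI k (m + 3) 1 2 (m - 2) ≤ (upJ k m).colon {g} := by
      refine up_idealI_one_le fun i h1 h2 => ?_
      rw [Submodule.mem_colon_singleton, smul_eq_mul]
      have e1 := upJ_mem3 (k := k) h1 h2
      have e2 : Xv k (m + 3) 1 * Xv k (m + 3) (m - 1) * Xv k (m + 3) m * Xv k (m + 3) i
          ∈ upJ k m := by
        by_cases h3 : 3 ≤ i
        · have := Ideal.mul_mem_left _ (Xv k (m + 3) (m - 1)) (upJ_mem2 (k := k) h3 h2)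
          convert this using 1
          ring
        · have := Ideal.mul_mem_left _ (Xv k (m + 3) 1 * Xv k (m + 3) m)
            (upJ_mem1 (k := k) (m := m) (i := i) (j := m - 1) h1 (by omega) le_rfl)
          convert this using 1
          ring
      have e3 := Ideal.sub_mem _
        (Ideal.mul_mem_left _ (Xv k (m + 3) (m + 1) * Xv k (m + 3) (m + 2)) e1) e2
      convert e3 using 1
      rw [hg]
      ring
    have := hle hu
    rwa [Submodule.mem_colon_singleton, smul_eq_mul] at this
  have hfin : Xv k (m + 3) (m + 1) * (f - c * g) ∈ upJ k m := by
    have e : Xv k (m + 3) (m + 1) * (f - c * g) = j + u * g := by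
      linear_combination -hjw
    rw [e]
    exact Ideal.add_mem _ hj hug
  have := (upJ_good (k := k) hm ⟨m, by omega⟩ le_rfl (by simp)).cancel hfin
  have e : f = (f - c * g) + c * g := by ring
  rw [e]
  exact Submodule.add_mem_sup this (Ideal.mem_span_singleton'.2 ⟨c, rfl⟩)

lemma up_eq_mem {A : Type*} [CommRing A] {I : Ideal A} {x y : A} (e : x = y) (h : y ∈ I) :
    x ∈ I := e ▸ h

/-- regularity of `z_2` modulo `z_1` -/
lemma up_reg2 {m : ℕ} (hm : 5 ≤ m) (f : MvPolynomial (Fin (m + 3)) k)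
    (hf : Xv k (m + 3) (m + 2) * f ∈ upJ k m +
      Ideal.span {Xv k (m + 3) (m + 1) * Xv k (m + 3) (m + 2) * Xv k (m + 3) (m + 3) -
        Xv k (m + 3) 1 * Xv k (m + 3) (m - 1) * Xv k (m + 3) m} +
      Ideal.span {Xv k (m + 3) (m + 1)}) :
    f ∈ upJ k m +
      Ideal.span {Xv k (m + 3) (m + 1) * Xv k (m + 3) (m + 2) * Xv k (m + 3) (m + 3) -
        Xv k (m + 3) 1 * Xv k (m + 3) (m - 1) * Xv k (m + 3) m} +
      Ideal.span {Xv k (m + 3) (m + 1)} := by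
  have key : upJ k m +
      Ideal.span {Xv k (m + 3) (m + 1) * Xv k (m + 3) (m + 2) * Xv k (m + 3) (m + 3) -
        Xv k (m + 3) 1 * Xv k (m + 3) (m - 1) * Xv k (m + 3) m} +
      Ideal.span {Xv k (m + 3) (m + 1)} = upJ k m +
      Ideal.span {Xv k (m + 3) 1 * Xv k (m + 3) (m - 1) * Xv k (m + 3) m} +
      Ideal.span {Xv k (m + 3) (m + 1)} := by
    apply le_antisymm
    · refine sup_le (sup_le (le_sup_left.trans le_sup_left) ?_) le_sup_right
      rw [Ideal.span_singleton_le_iff_mem, mul_assoc (Xv k (m + 3) (m + 1))]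
      exact Ideal.sub_mem _
        (Ideal.mul_mem_right _ _ (Ideal.mem_sup_right (Ideal.mem_span_singleton_self _)))
        (Ideal.mem_sup_left (Ideal.mem_sup_right (Ideal.mem_span_singleton_self _)))
    · refine sup_le (sup_le (le_sup_left.trans le_sup_left) ?_) le_sup_right
      rw [Ideal.span_singleton_le_iff_mem]
      have e : Xv k (m + 3) 1 * Xv k (m + 3) (m - 1) * Xv k (m + 3) m =
        Xv k (m + 3) (m + 1) * (Xv k (m + 3) (m + 2) * Xv k (m + 3) (m + 3)) -
        (Xv k (m + 3) (m + 1) * Xv k (m + 3) (m + 2) * Xv k (m + 3) (m + 3) -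
        Xv k (m + 3) 1 * Xv k (m + 3) (m - 1) * Xv k (m + 3) m) := by ring
      refine up_eq_mem e ?_
      exact Ideal.sub_mem _
        (Ideal.mul_mem_right _ _ (Ideal.mem_sup_right (Ideal.mem_span_singleton_self _)))
        (Ideal.mem_sup_left (Ideal.mem_sup_right (Ideal.mem_span_singleton_self _)))
  rw [key] at hf ⊢
  refine upGoodI.cancel (z := ⟨m + 1, by omega⟩) ?_ hf
  refine ((upJ_good hm _ (by simp) (by simp)).add (upGoodI_span ?_)).add (upGoodI_span ?_)
  · rintro _ rfl
    exact ((upGood_Xv (by simp)).mul (upGood_Xv (by simp; omega))).mul (upGood_Xv (by simp; omega))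
  · rintro _ rfl
    exact upGood_Xv (by simp)

/-- the isomorphism -/
lemma up_reg3 {m : ℕ} (hm : 5 ≤ m) :
    Nonempty ((MvPolynomial (Fin (m + 3)) k ⧸ (upJ k m +
      Ideal.span {Xv k (m + 3) (m + 1) * Xv k (m + 3) (m + 2) * Xv k (m + 3) (m + 3) -
        Xv k (m + 3) 1 * Xv k (m + 3) (m - 1) * Xv k (m + 3) m}) ⊔
      Ideal.span {Xv k (m + 3) (m + 1), Xv k (m + 3) (m + 2)}) ≃ₐ[k]
      (MvPolynomial (Fin (m + 1)) k ⧸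
        (idealI k (m + 1) 2 2 m + Ideal.span {Xv k (m + 1) 1 * Xv k (m + 1) (m + 1)} *
          idealI k (m + 1) 1 3 (m - 1)))) := by
  set K := (upJ k m +
      Ideal.span {Xv k (m + 3) (m + 1) * Xv k (m + 3) (m + 2) * Xv k (m + 3) (m + 3) -
        Xv k (m + 3) 1 * Xv k (m + 3) (m - 1) * Xv k (m + 3) m}) ⊔
      Ideal.span {Xv k (m + 3) (m + 1), Xv k (m + 3) (m + 2)} with hK
  set L := (idealI k (m + 1) 2 2 m + Ideal.span {Xv k (m + 1) 1 * Xv k (m + 1) (m + 1)} *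
          idealI k (m + 1) 1 3 (m - 1)) with hL
  let sF : ℕ → MvPolynomial (Fin (m + 1)) k := fun t =>
    if t ≤ m - 1 then Xv k (m + 1) t else if t = m then Xv k (m + 1) (m + 1) else
      if t = m + 3 then Xv k (m + 1) m else 0
  let sG : ℕ → MvPolynomial (Fin (m + 3)) k := fun t =>
    if t ≤ m - 1 then Xv k (m + 3) t else if t = m then Xv k (m + 3) (m + 3) else Xv k (m + 3) m
  have F1 : ∀ t, 1 ≤ t → t ≤ m - 1 → upSub (m + 3) sF (Xv k (m + 3) t) = Xv k (m + 1) t := by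
    intro t h1 h2
    rw [upSub_Xv sF h1 (by omega)]
    simp [sF, h2]
  have F2 : upSub (m + 3) sF (Xv k (m + 3) m) = Xv k (m + 1) (m + 1) := by
    rw [upSub_Xv sF (by omega) (by omega)]
    have : ¬ m ≤ m - 1 := by omega
    simp [sF, this]
  have F3 : upSub (m + 3) sF (Xv k (m + 3) (m + 3)) = Xv k (m + 1) m := by
    rw [upSub_Xv sF (by omega) (by omega)]
    have : ¬ m + 3 ≤ m - 1 := by omega
    simp [sF, this]
  have F4 : upSub (m + 3) sF (Xv k (m + 3) (m + 1)) = 0 := by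
    rw [upSub_Xv sF (by omega) (by omega)]
    have : ¬ m + 1 ≤ m - 1 := by omega
    simp [sF, this]
  have F5 : upSub (m + 3) sF (Xv k (m + 3) (m + 2)) = 0 := by
    rw [upSub_Xv sF (by omega) (by omega)]
    have : ¬ m + 2 ≤ m - 1 := by omega
    simp [sF, this]
  have G1 : ∀ t, 1 ≤ t → t ≤ m - 1 → upSub (m + 1) sG (Xv k (m + 1) t) = Xv k (m + 3) t := by
    intro t h1 h2
    rw [upSub_Xv sG h1 (by omega)]
    simp [sG, h2]
  have G2 : upSub (m + 1) sG (Xv k (m + 1) m) = Xv k (m + 3) (m + 3) := by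
    rw [upSub_Xv sG (by omega) (by omega)]
    have : ¬ m ≤ m - 1 := by omega
    simp [sG, this]
  have G3 : upSub (m + 1) sG (Xv k (m + 1) (m + 1)) = Xv k (m + 3) m := by
    rw [upSub_Xv sG (by omega) (by omega)]
    have : ¬ m + 1 ≤ m - 1 := by omega
    simp [sG, this]
  have L1 : ∀ i j, 2 ≤ i → i + 2 ≤ j → j ≤ m → Xv k (m + 1) i * Xv k (m + 1) j ∈ L :=
    fun i j h1 h2 h3 => Ideal.mem_sup_left (up_mem_two h1 h2 h3)
  have L2 : ∀ i, 3 ≤ i → i ≤ m - 1 →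
      Xv k (m + 1) 1 * Xv k (m + 1) (m + 1) * Xv k (m + 1) i ∈ L :=
    fun i h1 h2 => Ideal.mem_sup_right
      (Ideal.mul_mem_mul (Ideal.mem_span_singleton_self _) (up_mem_one h1 h2))
  have KJ : upJ k m ≤ K := le_sup_left.trans le_sup_left
  have Kz1 : Xv k (m + 3) (m + 1) ∈ K := Ideal.mem_sup_right (Ideal.subset_span (by simp))
  have Kz2 : Xv k (m + 3) (m + 2) ∈ K := Ideal.mem_sup_right (Ideal.subset_span (by simp))
  have KM : Xv k (m + 3) 1 * Xv k (m + 3) (m - 1) * Xv k (m + 3) m ∈ K := by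
    have e : Xv k (m + 3) 1 * Xv k (m + 3) (m - 1) * Xv k (m + 3) m =
        Xv k (m + 3) (m + 1) * (Xv k (m + 3) (m + 2) * Xv k (m + 3) (m + 3)) -
        (Xv k (m + 3) (m + 1) * Xv k (m + 3) (m + 2) * Xv k (m + 3) (m + 3) -
        Xv k (m + 3) 1 * Xv k (m + 3) (m - 1) * Xv k (m + 3) m) := by ring
    rw [e]
    exact Ideal.sub_mem _ (Ideal.mul_mem_right _ _ Kz1)
      (Ideal.mem_sup_left (Ideal.mem_sup_right (Ideal.mem_span_singleton_self _)))
  refine up_iso K L (upSub (m + 3) sF) (upSub (m + 1) sG) ?_ ?_ ?_ ?_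
  · refine sup_le (sup_le (upJ_le ?_ ?_ ?_) ?_) ?_
    · intro i j h1 h2 h3
      rw [Ideal.mem_comap, map_mul, F1 i (by omega) (by omega), F1 j (by omega) (by omega)]
      exact L1 i j h1 h2 (by omega)
    · intro i h1 h2
      rw [Ideal.mem_comap, map_mul, map_mul, F1 i (by omega) (by omega),
        F1 1 (by omega) (by omega), F2]
      exact L2 i h1 (by omega)
    · intro i h1 h2
      rw [Ideal.mem_comap, map_mul, F1 i (by omega) (by omega), F3, mul_comm]
      exact L1 i m h1 (by omega) le_rfl
    · rw [Ideal.span_singleton_le_iff_mem, Ideal.mem_comap, map_sub, map_mul, map_mul, map_mul,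
        map_mul, F4, F1 1 (by omega) (by omega), F1 (m - 1) (by omega) (by omega), F2,
        zero_mul, zero_mul, zero_sub]
      refine Ideal.neg_mem_iff _ |>.2 ?_
      rw [mul_right_comm]
      exact L2 (m - 1) (by omega) le_rfl
    · rw [Ideal.span_le]
      rintro x (rfl | rfl)
      · simp only [SetLike.mem_coe, Ideal.mem_comap, F4]; exact Ideal.zero_mem _
      · simp only [SetLike.mem_coe, Ideal.mem_comap, F5]; exact Ideal.zero_mem _
  · refine sup_le (up_idealI_two_le ?_) ?_
    · intro i j h1 h2 h3
      rw [Ideal.mem_comap, map_mul, G1 i (by omega) (by omega)]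
      by_cases hj : j = m
      · subst hj
        rw [G2, mul_comm]
        exact KJ (upJ_mem3 h1 (by omega))
      · rw [G1 j (by omega) (by omega)]
        exact KJ (upJ_mem1 h1 h2 (by omega))
    · rw [idealI, Ideal.span_mul_span', Ideal.span_le]
      rintro _ ⟨a, ha, b, ⟨t, e0, e1, -, rfl⟩, rfl⟩
      rw [Set.mem_singleton_iff] at ha
      subst ha
      have e1' : t 0 ≤ m - 1 := by simpa using e1
      simp only [SetLike.mem_coe, Ideal.mem_comap, Finset.prod_range_one, map_mul]
      rw [G1 1 (by omega) (by omega), G3, G1 (t 0) (by omega) (by omega)]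
      by_cases hj : t 0 = m - 1
      · rw [hj, mul_right_comm]
        exact KM
      · exact KJ (upJ_mem2 e0 (by omega))
  · refine up_sub_mem ((upSub (m + 3) sF).comp (upSub (m + 1) sG)) L ?_
    intro t h1 h2
    rw [AlgHom.comp_apply]
    obtain h | rfl | rfl : t ≤ m - 1 ∨ t = m ∨ t = m + 1 := by omega
    · rw [G1 t h1 h, F1 t h1 h, sub_self]; exact Ideal.zero_mem _
    · rw [G2, F3, sub_self]; exact Ideal.zero_mem _
    · rw [G3, F2, sub_self]; exact Ideal.zero_mem _
  · refine up_sub_mem ((upSub (m + 1) sG).comp (upSub (m + 3) sF)) K ?_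
    intro t h1 h2
    rw [AlgHom.comp_apply]
    obtain h | rfl | rfl | rfl | rfl :
      t ≤ m - 1 ∨ t = m ∨ t = m + 1 ∨ t = m + 2 ∨ t = m + 3 := by omega
    · rw [F1 t h1 h, G1 t h1 h, sub_self]; exact Ideal.zero_mem _
    · rw [F2, G3, sub_self]; exact Ideal.zero_mem _
    · rw [F4, map_zero, sub_zero]; exact Kz1
    · rw [F5, map_zero, sub_zero]; exact Kz2
    · rw [F3, G2, sub_self]; exact Ideal.zero_mem _

lemma up_nzd1 {A : Type*} [CommRing A] (Q : Ideal A) (z : A) (h : ∀ f, z * f ∈ Q → f ∈ Q) :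
    Ideal.Quotient.mk Q z ∈ nonZeroDivisors (A ⧸ Q) := by
  rw [mem_nonZeroDivisors_iff_right]
  intro x hx
  obtain ⟨f, rfl⟩ := Ideal.Quotient.mk_surjective x
  rw [← map_mul, Ideal.Quotient.eq_zero_iff_mem, mul_comm] at hx
  exact Ideal.Quotient.eq_zero_iff_mem.2 (h f hx)

lemma up_nzd2 {A : Type*} [CommRing A] (Q : Ideal A) (z w : A)
    (h : ∀ f, w * f ∈ Q + Ideal.span {z} → f ∈ Q + Ideal.span {z}) :
    Ideal.Quotient.mk (Ideal.span {Ideal.Quotient.mk Q z}) (Ideal.Quotient.mk Q w) ∈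
      nonZeroDivisors ((A ⧸ Q) ⧸ Ideal.span {Ideal.Quotient.mk Q z}) := by
  have key : ∀ f, Ideal.Quotient.mk Q f ∈ Ideal.span {Ideal.Quotient.mk Q z} ↔
      f ∈ Q + Ideal.span {z} := by
    intro f
    have : Ideal.span {Ideal.Quotient.mk Q z} = (Ideal.span {z}).map (Ideal.Quotient.mk Q) := by
      rw [Ideal.map_span, Set.image_singleton]
    rw [this, ← Ideal.mem_comap, Ideal.comap_map_of_surjective _ Ideal.Quotient.mk_surjective,
      ← RingHom.ker_eq_comap_bot, Ideal.mk_ker, sup_comm]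
    rfl
  refine up_nzd1 _ _ ?_
  intro x hx
  obtain ⟨f, rfl⟩ := Ideal.Quotient.mk_surjective x
  rw [← map_mul, key] at hx
  exact (key f).2 (h f hx)

lemma up_iso2 {A B : Type*} [CommRing A] [CommRing B] [Algebra k A] [Algebra k B]
    (Q : Ideal A) (z w : A) (h : Nonempty ((A ⧸ Q ⊔ Ideal.span {z, w}) ≃ₐ[k] B)) :
    Nonempty (((A ⧸ Q) ⧸ Ideal.span {Ideal.Quotient.mk Q z, Ideal.Quotient.mk Q w}) ≃ₐ[k] B) := by
  obtain ⟨e⟩ := h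
  have : Ideal.span {Ideal.Quotient.mk Q z, Ideal.Quotient.mk Q w} =
      (Ideal.span {z, w}).map (Ideal.Quotient.mkₐ k Q) := by
    rw [Ideal.map_span, Set.image_pair]
    rfl
  exact ⟨(Ideal.quotientEquivAlgOfEq k this).trans
    ((DoubleQuot.quotQuotEquivQuotSupₐ k Q (Ideal.span {z, w})).trans e)⟩

end helpers

/-- Unprojection for `d = 3`. Let `m ≥ 5`. In `k[x_1,…,x_m,z_1,z_2,T]` (with `z_1, z_2, T`
the last three variables) let
`Q = I_{2,2,m−1} + x_1x_m·I_{1,3,m−2} + T·I_{1,2,m−2} + (z_1z_2T − x_1x_{m−1}x_m)` and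
`S = k[x_1,…,x_m,z_1,z_2,T]/Q`. Then the images of `z_1, z_2` form a regular sequence on
`S`, and `S/(z_1,z_2) ≅ k[x_1,…,x_{m+1}]/(I_{2,2,m} + x_1x_{m+1}·I_{1,3,m−1}) = k[Δ(3,m+1)]`
as `k`-algebras. -/
theorem unprojection_cyclic_three (k : Type*) [Field k] (m : ℕ) (hm : 5 ≤ m)
    (Q : Ideal (MvPolynomial (Fin (m + 3)) k))
    (hQ : Q = idealI k (m + 3) 2 2 (m - 1) +
      Ideal.span {Xv k (m + 3) 1 * Xv k (m + 3) m} * idealI k (m + 3) 1 3 (m - 2) +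
      Ideal.span {Xv k (m + 3) (m + 3)} * idealI k (m + 3) 1 2 (m - 2) +
      Ideal.span {Xv k (m + 3) (m + 1) * Xv k (m + 3) (m + 2) * Xv k (m + 3) (m + 3) -
        Xv k (m + 3) 1 * Xv k (m + 3) (m - 1) * Xv k (m + 3) m}) :
    Ideal.Quotient.mk Q (Xv k (m + 3) (m + 1)) ∈
      nonZeroDivisors (MvPolynomial (Fin (m + 3)) k ⧸ Q) ∧
    Ideal.Quotient.mk (Ideal.span {Ideal.Quotient.mk Q (Xv k (m + 3) (m + 1))})
        (Ideal.Quotient.mk Q (Xv k (m + 3) (m + 2))) ∈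
      nonZeroDivisors ((MvPolynomial (Fin (m + 3)) k ⧸ Q) ⧸
        Ideal.span {Ideal.Quotient.mk Q (Xv k (m + 3) (m + 1))}) ∧
    Nonempty (((MvPolynomial (Fin (m + 3)) k ⧸ Q) ⧸
        Ideal.span {Ideal.Quotient.mk Q (Xv k (m + 3) (m + 1)),
          Ideal.Quotient.mk Q (Xv k (m + 3) (m + 2))}) ≃ₐ[k]
      (MvPolynomial (Fin (m + 1)) k ⧸
        (idealI k (m + 1) 2 2 m + Ideal.span {Xv k (m + 1) 1 * Xv k (m + 1) (m + 1)} *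
          idealI k (m + 1) 1 3 (m - 1)))) := by
  subst hQ
  exact ⟨up_nzd1 _ _ (up_reg1 hm), up_nzd2 _ _ _ (up_reg2 hm), up_iso2 _ _ _ (up_reg3 hm)⟩
end
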